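/- Assume additionally that 1/2 < α < 1 and set H = 1/(2α). Then for every t > 0 and every ρ > 0, with T_δ⁻ := t^{1-ρ} δ^{-2H(1-ρ)}, one has lim_{δ→0+} E|y_δ(T_δ⁻)|² = 0. -/

import Mathlib

open MeasureTheory ProbabilityTheory Filter Set
open scoped RealInnerProductSpace

/-- The covariance matrix entries `R_{ij}(x) = ∫_{ℝᵈ} cos(k·x) R̂_{ij}(k) dk`, where
`R̂_{ij}(k) = a(|k|)|k|^{-(2α+d-2)} (δ_{ij} - k_i k_j/|k|²)`. -/
noncomputable def covEntry (d : ℕ) (α : ℝ) (a : ℝ → ℝ)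
    (x : EuclideanSpace ℝ (Fin d)) (i j : Fin d) : ℝ :=
  ∫ k : EuclideanSpace ℝ (Fin d),
    Real.cos ⟪k, x⟫ *
      (a ‖k‖ * ‖k‖ ^ (-(2 * α + (d : ℝ) - 2)) *
        ((if i = j then (1:ℝ) else 0) - k i * k j / ‖k‖ ^ 2))

lemma aux_prod_bound {d : ℕ} (i0 : Fin d) (a b c : ℝ) (hac : a ≤ c) (hc0 : 0 ≤ c)
    (habc : a + b = d * c)
    (z : EuclideanSpace ℝ (Fin d)) (hz : ∀ i, z i ≠ 0) :
    ‖z‖ ^ (-b) * |z i0| ^ (-a) ≤ ∏ i, |z i| ^ (-c) := by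
  have hle : ∀ i, |z i| ≤ ‖z‖ := fun i => by simpa using PiLp.norm_apply_le z i
  have hpos : ∀ i, 0 < |z i| := fun i => abs_pos.2 (hz i)
  have hn : 0 < ‖z‖ := (hpos i0).trans_le (hle i0)
  rw [← Finset.mul_prod_erase Finset.univ _ (Finset.mem_univ i0)]
  have h1 : ∏ i ∈ Finset.univ.erase i0, ‖z‖ ^ (-c) ≤ ∏ i ∈ Finset.univ.erase i0, |z i| ^ (-c) := by
    apply Finset.prod_le_prod
    · intro i _; positivity
    · intro i _; exact Real.rpow_le_rpow_of_nonpos (hpos i) (hle i) (by linarith)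
  rw [Finset.prod_const, Finset.card_erase_of_mem (Finset.mem_univ _), Finset.card_univ,
    Fintype.card_fin] at h1
  have hd : 1 ≤ d := i0.pos
  have h2 : ‖z‖ ^ (-(c - a)) ≤ |z i0| ^ (-(c-a)) :=
    Real.rpow_le_rpow_of_nonpos (hpos i0) (hle i0) (by linarith)
  calc ‖z‖ ^ (-b) * |z i0| ^ (-a) = (‖z‖ ^ (-(c-a)) * |z i0| ^ (-a)) * (‖z‖ ^ (-c)) ^ (d-1) := by
        rw [← Real.rpow_natCast (‖z‖ ^ (-c)), ← Real.rpow_mul hn.le, mul_right_comm,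
          ← Real.rpow_add hn]
        congr 2
        push_cast [hd]
        linarith
    _ ≤ (|z i0| ^ (-(c-a)) * |z i0| ^ (-a)) * ∏ i ∈ Finset.univ.erase i0, |z i| ^ (-c) := by
        gcongr
    _ = _ := by
        rw [← Real.rpow_add (hpos i0)]; congr 2; ring

lemma aux_int_1d (K c : ℝ) (hK : 0 < K) (hc : c < 1) :
    Integrable (fun z : ℝ => (Icc (-K) K).indicator (fun z => |z| ^ (-c)) z) := by
  rw [integrable_indicator_iff measurableSet_Icc]
  have h : IntervalIntegrable (fun x : ℝ => x ^ (-c)) volume 0 K :=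
    intervalIntegral.intervalIntegrable_rpow' (by linarith)
  have h1 : IntegrableOn (fun z : ℝ => |z| ^ (-c)) (Ioc 0 K) := by
    rw [intervalIntegrable_iff_integrableOn_Ioc_of_le hK.le] at h
    refine h.congr_fun (fun x hx => ?_) measurableSet_Ioc
    simp [abs_of_pos hx.1]
  have h2 : IntegrableOn (fun z : ℝ => |z| ^ (-c)) (Icc 0 K) := by
    rwa [integrableOn_Icc_iff_integrableOn_Ioc]
  have h3 : IntegrableOn (fun z : ℝ => |z| ^ (-c)) (Icc (-K) 0) := by
    have := (MeasurePreserving.integrableOn_comp_preimage (Measure.measurePreserving_neg (volume : Measure ℝ))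
      (Homeomorph.neg ℝ).measurableEmbedding (f := fun z : ℝ => |z| ^ (-c)) (s := Icc 0 K)).2 h2
    simpa [Function.comp_def] using this
  have := h3.union h2
  rwa [Icc_union_Icc_eq_Icc (by linarith) hK.le] at this

lemma spec_int {d : ℕ} (hd : 1 ≤ d) (a b c K : ℝ) (hac : a ≤ c) (hc0 : 0 ≤ c) (hc1 : c < 1)
    (habc : a + b = d * c) (hK : 0 < K) (v : EuclideanSpace ℝ (Fin d)) (hv : ‖v‖ = 1) :
    Integrable (fun k : EuclideanSpace ℝ (Fin d) =>
      (Metric.closedBall 0 K).indicator (fun k => ‖k‖ ^ (-b) * |⟪k, v⟫| ^ (-a)) k) := by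
  let i0 : Fin d := ⟨0, hd⟩
  obtain ⟨B, hB⟩ : ∃ B : OrthonormalBasis (Fin d) ℝ (EuclideanSpace ℝ (Fin d)), B i0 = v := by
    have := Orthonormal.exists_orthonormalBasis_extension_of_card_eq (𝕜 := ℝ)
      (E := EuclideanSpace ℝ (Fin d)) (ι := Fin d) (by simp) (v := fun _ => v) (s := {i0}) (by
        constructor
        · intro i; simpa using hv
        · intro i j hij; exact absurd (Subsingleton.elim i j) hij)
    obtain ⟨B, hB⟩ := this
    exact ⟨B, hB i0 rfl⟩
  have h0 : Integrable (fun z : Fin d → ℝ =>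
      ∏ i, (Icc (-K) K).indicator (fun z => |z| ^ (-c)) (z i)) :=
    Integrable.fintype_prod (f := fun _ z => (Icc (-K) K).indicator (fun z => |z| ^ (-c)) z)
      (fun i => aux_int_1d K c hK hc1)
  have h1 : Integrable (fun z : Fin d → ℝ =>
      (Metric.closedBall 0 K).indicator (fun k : EuclideanSpace ℝ (Fin d) =>
        ‖k‖ ^ (-b) * |k i0| ^ (-a)) (WithLp.toLp 2 z)) := by
    refine h0.mono' ?_ ?_
    · apply Measurable.aestronglyMeasurable
      have : Measurable ((Metric.closedBall 0 K).indicator (fun k : EuclideanSpace ℝ (Fin d) =>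
        ‖k‖ ^ (-b) * |k i0| ^ (-a))) := by
        apply Measurable.indicator _ Metric.isClosed_closedBall.measurableSet
        fun_prop
      exact this.comp (PiLp.volume_preserving_toLp (Fin d)).measurable
    · have hae : ∀ᵐ z : Fin d → ℝ, ∀ i, z i ≠ 0 := by
        rw [ae_all_iff]
        intro i
        have := Measure.ae_eval_ne (μ := fun _ : Fin d => (volume : Measure ℝ)) i 0
        simpa [volume_pi] using this
      filter_upwards [hae] with z hz
      by_cases hzK : WithLp.toLp 2 z ∈ Metric.closedBall (0 : EuclideanSpace ℝ (Fin d)) K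
      · rw [indicator_of_mem hzK, Real.norm_of_nonneg (by positivity)]
        refine (aux_prod_bound i0 a b c hac hc0 habc (WithLp.toLp 2 z) hz).trans ?_
        apply Finset.prod_le_prod
        · intro i _; positivity
        · intro i _
          rw [indicator_of_mem]
          have := (PiLp.norm_apply_le (WithLp.toLp 2 z) i).trans (mem_closedBall_zero_iff.1 hzK)
          rw [Real.norm_eq_abs] at this
          exact abs_le.1 this
      · rw [indicator_of_notMem hzK, norm_zero]
        exact Finset.prod_nonneg fun i _ => indicator_nonneg (fun _ _ => by positivity) _
  have h2 : Integrable ((Metric.closedBall 0 K).indicator (fun k : EuclideanSpace ℝ (Fin d) =>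
        ‖k‖ ^ (-b) * |k i0| ^ (-a))) :=
    ((PiLp.volume_preserving_toLp (Fin d)).integrable_comp_emb
      (MeasurableEquiv.toLp 2 (Fin d → ℝ)).measurableEmbedding).1 h1
  have h3 := (B.measurePreserving_repr.integrable_comp_emb
    B.repr.toHomeomorph.measurableEmbedding).2 h2
  refine h3.congr (Eventually.of_forall fun k => ?_)
  simp only [Function.comp, indicator, mem_closedBall_zero_iff, LinearIsometryEquiv.norm_map]
  rw [B.repr_apply_apply, hB, real_inner_comm]

lemma ae_inner_ne {d : ℕ} (v : EuclideanSpace ℝ (Fin d)) (hv : ‖v‖ = 1) :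
    ∀ᵐ k : EuclideanSpace ℝ (Fin d), ⟪k, v⟫ ≠ 0 := by
  have h := Measure.addHaar_submodule (volume : Measure (EuclideanSpace ℝ (Fin d)))
    (ℝ ∙ v)ᗮ (by
      intro h
      have : v ∈ (ℝ ∙ v)ᗮ := h ▸ Submodule.mem_top
      rw [Submodule.mem_orthogonal_singleton_iff_inner_right] at this
      simp [hv] at this)
  rw [ae_iff]
  convert h using 2
  ext k
  simp [Submodule.mem_orthogonal_singleton_iff_inner_left]

lemma gauss_moment (p : ℕ) : ∃ m : ENNReal, m ≠ ⊤ ∧ ∀ {Ω : Type*} [MeasurableSpace Ω] (P : Measure Ω)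
    (Z : Ω → ℝ) (s : NNReal), Measurable Z → P.map Z = gaussianReal 0 s →
    ∫⁻ ω, ‖Z ω‖ₑ ^ p ∂P ≤ m * (ENNReal.ofReal (Real.sqrt s)) ^ p := by
  refine ⟨∫⁻ x, ‖x‖ₑ ^ p ∂(gaussianReal 0 1), ?_, ?_⟩
  · have h := (memLp_id_gaussianReal (μ := 0) (v := 1) (p : NNReal))
    rcases Nat.eq_zero_or_pos p with rfl | hp
    · simp
    · have := lintegral_rpow_enorm_lt_top_of_eLpNorm_lt_top (p := ((p:NNReal):ENNReal)) (by simpa using hp.ne') (by simp) h.2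
      simp at this
      exact this.ne
  · intro Ω _ P Z s hZ hmap
    have h1 : ∫⁻ ω, ‖Z ω‖ₑ ^ p ∂P = ∫⁻ x, ‖x‖ₑ ^ p ∂(gaussianReal 0 s) := by
      rw [← hmap, lintegral_map (by fun_prop) hZ]
    have h2 : gaussianReal 0 s = (gaussianReal 0 1).map (fun x => Real.sqrt s * x) := by
      rw [gaussianReal_map_const_mul]
      congr 1
      · simp
      · ext; simp
    rw [h1, h2, lintegral_map (by fun_prop) (by fun_prop)]
    simp_rw [enorm_mul, mul_pow]
    rw [lintegral_const_mul _ (by fun_prop), mul_comm, Real.enorm_of_nonneg (Real.sqrt_nonneg _)]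

lemma norm_pow_le_coord {d : ℕ} (p : ℕ) (z : EuclideanSpace ℝ (Fin d)) (hd : 1 ≤ d) :
    ‖z‖ₑ ^ p ≤ (d:ENNReal) ^ p * ∑ i, ‖z i‖ₑ ^ p := by
  have : Nonempty (Fin d) := ⟨⟨0, hd⟩⟩
  obtain ⟨i, hi⟩ : ∃ i, ∀ j, |z j| ≤ |z i| := by
    obtain ⟨i, -, hi⟩ := Finset.exists_max_image Finset.univ (fun i => |z i|) Finset.univ_nonempty
    exact ⟨i, fun j => hi j (Finset.mem_univ _)⟩
  have h : ‖z‖ ≤ d * ‖z i‖ := by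
    rw [EuclideanSpace.norm_eq]
    apply Real.sqrt_le_iff.2
    refine ⟨by positivity, ?_⟩
    calc ∑ j, ‖z j‖ ^ 2 ≤ ∑ j : Fin d, ‖z i‖ ^ 2 := by
          apply Finset.sum_le_sum; intro j _; gcongr; exact hi j
      _ = d * ‖z i‖ ^ 2 := by simp
      _ ≤ (d * ‖z i‖) ^ 2 := by
          have : (1:ℝ) ≤ d := by exact_mod_cast hd
          nlinarith [sq_nonneg (‖z i‖), mul_nonneg (sub_nonneg.2 this) (mul_nonneg (by linarith : (0:ℝ) ≤ d) (sq_nonneg ‖z i‖))]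
  have h' : ‖z‖ₑ ≤ d * ‖z i‖ₑ := by
    rw [← ofReal_norm, ← ofReal_norm, ← ENNReal.ofReal_natCast, ← ENNReal.ofReal_mul (by positivity)]
    exact ENNReal.ofReal_le_ofReal h
  calc ‖z‖ₑ ^ p ≤ (d * ‖z i‖ₑ) ^ p := by gcongr
    _ = (d:ENNReal) ^ p * ‖z i‖ₑ ^ p := mul_pow _ _ _
    _ ≤ _ := by
      gcongr
      exact Finset.single_le_sum (f := fun i => ‖z i‖ₑ ^ p) (fun _ _ => zero_le) (Finset.mem_univ i)

lemma cov_var_bound (d : ℕ) (hd : 2 ≤ d) (α : ℝ) (K : ℝ) (hK : 0 < K)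
    (a : ℝ → ℝ) (ha_nonneg : ∀ r : ℝ, 0 ≤ r → 0 ≤ a r)
    (M : ℝ) (hM : ∀ r : ℝ, 0 ≤ r → a r ≤ M)
    (ha_meas : Measurable a) (ha_supp : ∀ r : ℝ, K < r → a r = 0)
    (v : EuclideanSpace ℝ (Fin d)) (hv : ‖v‖ = 1)
    (ex : ℝ) (hex : 0 ≤ ex)
    (hIntg : Integrable (fun k : EuclideanSpace ℝ (Fin d) =>
      (Metric.closedBall 0 K).indicator (fun k => ‖k‖ ^ (-(2 * α + (d : ℝ) - 2)) * |⟪k, v⟫| ^ (-ex)) k))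
    (N : ℕ) (w : Fin N → ℝ) (x : Fin N → EuclideanSpace ℝ (Fin d)) (i : Fin d) (L : ℝ)
    (hL : ∀ k : EuclideanSpace ℝ (Fin d), ‖k‖ ≤ K → ⟪k, v⟫ ≠ 0 →
      (∑ j, w j * Real.cos ⟪k, x j⟫) ^ 2 + (∑ j, w j * Real.sin ⟪k, x j⟫) ^ 2 ≤ L ^ 2 * |⟪k, v⟫| ^ (-ex)) :
    ∑ j, ∑ l, w j * covEntry d α a (x j - x l) i i * w l ≤
      L ^ 2 * (M * ∫ k : EuclideanSpace ℝ (Fin d),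
      (Metric.closedBall 0 K).indicator (fun k => ‖k‖ ^ (-(2 * α + (d : ℝ) - 2)) * |⟪k, v⟫| ^ (-ex)) k) := by
  set b := 2 * α + (d : ℝ) - 2 with hb
  set g := fun k : EuclideanSpace ℝ (Fin d) =>
    a ‖k‖ * ‖k‖ ^ (-b) * (1 - k i * k i / ‖k‖ ^ 2) with hg
  have hM0 : 0 ≤ M := (ha_nonneg 0 le_rfl).trans (hM 0 le_rfl)
  have hfac : ∀ k : EuclideanSpace ℝ (Fin d), 0 ≤ 1 - k i * k i / ‖k‖ ^ 2 ∧ 1 - k i * k i / ‖k‖ ^ 2 ≤ 1 := by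
    intro k
    have h1 : |k i| ≤ ‖k‖ := by simpa using PiLp.norm_apply_le k i
    have h2 : k i * k i ≤ ‖k‖ ^ 2 := by rw [← abs_mul_abs_self, sq]; gcongr
    constructor
    · rw [sub_nonneg]; exact div_le_one_of_le₀ h2 (by positivity)
    · have : 0 ≤ k i * k i / ‖k‖ ^ 2 := div_nonneg (mul_self_nonneg _) (by positivity)
      linarith
  have hg0 : ∀ k, 0 ≤ g k := fun k =>
    mul_nonneg (mul_nonneg (ha_nonneg _ (norm_nonneg _)) (by positivity)) (hfac k).1
  have hgmeas : Measurable g := by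
    have : Measurable fun k : EuclideanSpace ℝ (Fin d) => a ‖k‖ := ha_meas.comp measurable_norm
    fun_prop
  have hgz : ∀ k, K < ‖k‖ → g k = 0 := fun k hk => by simp [hg, ha_supp _ hk]
  have hgle : ∀ k, ‖k‖ ≤ K → g k ≤ M * ‖k‖ ^ (-b) := fun k hk => by
    calc g k ≤ a ‖k‖ * ‖k‖ ^ (-b) * 1 := by
          apply mul_le_mul_of_nonneg_left (hfac k).2
          exact mul_nonneg (ha_nonneg _ (norm_nonneg _)) (by positivity)
      _ ≤ M * ‖k‖ ^ (-b) := by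
          rw [mul_one]; gcongr; exact hM _ (norm_nonneg _)
  have hae := ae_inner_ne v hv
  have hgint : Integrable g := by
    refine (hIntg.const_mul (M * K ^ ex)).mono' hgmeas.aestronglyMeasurable ?_
    filter_upwards [hae] with k hk
    rw [Real.norm_of_nonneg (hg0 k)]
    by_cases hkK : ‖k‖ ≤ K
    · have hmem : k ∈ Metric.closedBall (0 : EuclideanSpace ℝ (Fin d)) K := by simpa using hkK
      simp only [indicator_of_mem hmem]
      have hθ : 0 < |⟪k, v⟫| := abs_pos.2 hk
      have hθK : |⟪k, v⟫| ≤ K := (abs_real_inner_le_norm k v).trans (by rw [hv, mul_one]; exact hkK)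
      have h1 : 1 ≤ K ^ ex * |⟪k, v⟫| ^ (-ex) := by
        rw [Real.rpow_neg hθ.le, ← div_eq_mul_inv, one_le_div (by positivity)]
        exact Real.rpow_le_rpow hθ.le hθK hex
      calc g k ≤ M * ‖k‖ ^ (-b) * 1 := by rw [mul_one]; exact hgle k hkK
        _ ≤ M * ‖k‖ ^ (-b) * (K ^ ex * |⟪k, v⟫| ^ (-ex)) := by gcongr
        _ = _ := by ring
    · have hmem : k ∉ Metric.closedBall (0 : EuclideanSpace ℝ (Fin d)) K := by simpa using hkK
      rw [hgz k (not_le.1 hkK), indicator_of_notMem hmem, mul_zero]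
  have hcint : ∀ y : EuclideanSpace ℝ (Fin d), Integrable fun k => Real.cos ⟪k, y⟫ * g k := by
    intro y
    refine hgint.norm.mono' (Measurable.aestronglyMeasurable (by fun_prop)) (Eventually.of_forall fun k => ?_)
    rw [norm_mul]
    exact mul_le_of_le_one_left (norm_nonneg _) (Real.abs_cos_le_one _)
  have hcov : ∀ y, covEntry d α a y i i = ∫ k, Real.cos ⟪k, y⟫ * g k := by
    intro y; simp [covEntry, hg, hb]
  have heq : ∑ j, ∑ l, w j * covEntry d α a (x j - x l) i i * w l =
      ∫ k, ((∑ j, w j * Real.cos ⟪k, x j⟫) ^ 2 + (∑ j, w j * Real.sin ⟪k, x j⟫) ^ 2) * g k := by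
    have : ∀ k, ((∑ j, w j * Real.cos ⟪k, x j⟫) ^ 2 + (∑ j, w j * Real.sin ⟪k, x j⟫) ^ 2) * g k
        = ∑ j, ∑ l, (w j * w l) * (Real.cos ⟪k, x j - x l⟫ * g k) := by
      intro k
      rw [sq, sq, Finset.sum_mul_sum, Finset.sum_mul_sum, ← Finset.sum_add_distrib, Finset.sum_mul]
      refine Finset.sum_congr rfl fun j _ => ?_
      rw [← Finset.sum_add_distrib, Finset.sum_mul]
      refine Finset.sum_congr rfl fun l _ => ?_
      rw [inner_sub_right, Real.cos_sub]; ring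
    simp_rw [this]
    rw [integral_finsetSum _ fun j _ => integrable_finsetSum _ fun l _ => (hcint _).const_mul _]
    refine Finset.sum_congr rfl fun j _ => ?_
    rw [integral_finsetSum _ fun l _ => (hcint _).const_mul _]
    refine Finset.sum_congr rfl fun l _ => ?_
    rw [integral_const_mul, hcov]; ring
  rw [heq, ← integral_const_mul, ← integral_const_mul]
  refine integral_mono_of_nonneg (Eventually.of_forall fun k => mul_nonneg (by positivity) (hg0 k))
    ((hIntg.const_mul _).const_mul _) ?_
  filter_upwards [hae] with k hk
  by_cases hkK : ‖k‖ ≤ K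
  · have hmem : k ∈ Metric.closedBall (0 : EuclideanSpace ℝ (Fin d)) K := by simpa using hkK
    simp only [indicator_of_mem hmem]
    calc _ ≤ (L ^ 2 * |⟪k, v⟫| ^ (-ex)) * (M * ‖k‖ ^ (-b)) :=
          mul_le_mul (hL k hkK hk) (hgle k hkK) (hg0 k) (by positivity)
      _ = _ := by ring
  · have hmem : k ∉ Metric.closedBall (0 : EuclideanSpace ℝ (Fin d)) K := by simpa using hkK
    simp [hgz k (not_le.1 hkK), indicator_of_notMem hmem]

/-- Moment bound for linear combinations of the field. -/
lemma field_moment (d : ℕ) (hd : 2 ≤ d) (α : ℝ) (K : ℝ) (hK : 0 < K)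
    (a : ℝ → ℝ) (ha_nonneg : ∀ r : ℝ, 0 ≤ r → 0 ≤ a r)
    (ha_bdd : ∃ M : ℝ, ∀ r : ℝ, 0 ≤ r → a r ≤ M)
    (ha_meas : Measurable a) (ha_supp : ∀ r : ℝ, K < r → a r = 0)
    (v : EuclideanSpace ℝ (Fin d)) (hv : ‖v‖ = 1)
    (ex : ℝ) (hex : 0 ≤ ex)
    (hIntg : Integrable (fun k : EuclideanSpace ℝ (Fin d) =>
      (Metric.closedBall 0 K).indicator (fun k => ‖k‖ ^ (-(2 * α + (d : ℝ) - 2)) * |⟪k, v⟫| ^ (-ex)) k))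
    {Ω : Type*} [MeasurableSpace Ω] (P : Measure Ω)
    (F : Ω → EuclideanSpace ℝ (Fin d) → EuclideanSpace ℝ (Fin d))
    (hF_meas : Measurable (Function.uncurry F))
    (hF_gauss : ∀ (N : ℕ) (x c : Fin N → EuclideanSpace ℝ (Fin d)),
      Measure.map (fun ω => ∑ j : Fin N, ⟪c j, F ω (x j)⟫) P =
        gaussianReal 0 (Real.toNNReal (∑ j : Fin N, ∑ l : Fin N,
          ∑ i : Fin d, ∑ i' : Fin d,
            c j i * covEntry d α a (x j - x l) i i' * c l i')))
    (p : ℕ) :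
    ∃ C : ENNReal, C ≠ ⊤ ∧ ∀ (N : ℕ) (w : Fin N → ℝ) (x : Fin N → EuclideanSpace ℝ (Fin d)) (L : ℝ), 0 ≤ L →
    (∀ k : EuclideanSpace ℝ (Fin d), ‖k‖ ≤ K → ⟪k, v⟫ ≠ 0 →
      (∑ j, w j * Real.cos ⟪k, x j⟫) ^ 2 + (∑ j, w j * Real.sin ⟪k, x j⟫) ^ 2 ≤ L ^ 2 * |⟪k, v⟫| ^ (-ex)) →
    ∫⁻ ω, ‖∑ j, w j • F ω (x j)‖ₑ ^ p ∂P ≤ C * ENNReal.ofReal L ^ p := by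
  obtain ⟨M, hM⟩ := ha_bdd
  have hM0 : 0 ≤ M := (ha_nonneg 0 le_rfl).trans (hM 0 le_rfl)
  obtain ⟨m, hm, hmom⟩ := gauss_moment p
  set V := M * ∫ k : EuclideanSpace ℝ (Fin d),
      (Metric.closedBall 0 K).indicator (fun k => ‖k‖ ^ (-(2 * α + (d : ℝ) - 2)) * |⟪k, v⟫| ^ (-ex)) k with hV
  have hV0 : 0 ≤ V := mul_nonneg hM0 (integral_nonneg fun k => indicator_nonneg (fun _ _ => by positivity) _)
  refine ⟨(d:ENNReal) ^ p * (d * (m * ENNReal.ofReal (Real.sqrt V) ^ p)), ?_, ?_⟩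
  · finiteness
  intro N w x L hL0 hL
  have hFx : ∀ y, Measurable fun ω => F ω y := fun y => hF_meas.comp (measurable_id.prodMk measurable_const)
  have hcoord : ∀ i : Fin d, ∫⁻ ω, ‖(∑ j, w j • F ω (x j)) i‖ₑ ^ p ∂P ≤
      (m * ENNReal.ofReal (Real.sqrt V) ^ p) * ENNReal.ofReal L ^ p := by
    intro i
    have h1 := hF_gauss N x (fun j => w j • EuclideanSpace.single i 1)
    have h2 : (fun ω => ∑ j : Fin N, ⟪(w j • EuclideanSpace.single i 1 : EuclideanSpace ℝ (Fin d)), F ω (x j)⟫)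
        = fun ω => (∑ j, w j • F ω (x j)) i := by
      funext ω
      simp [inner_smul_left, EuclideanSpace.inner_single_left]
    have h3 : ∑ j : Fin N, ∑ l : Fin N, ∑ i1 : Fin d, ∑ i2 : Fin d,
            (w j • EuclideanSpace.single i 1 : EuclideanSpace ℝ (Fin d)) i1 * covEntry d α a (x j - x l) i1 i2 *
            (w l • EuclideanSpace.single i 1 : EuclideanSpace ℝ (Fin d)) i2
        = ∑ j, ∑ l, w j * covEntry d α a (x j - x l) i i * w l := by
      refine Finset.sum_congr rfl fun j _ => Finset.sum_congr rfl fun l _ => ?_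
      simp
    rw [h2, h3] at h1
    have h4 := hmom P _ _ (by fun_prop) h1
    refine h4.trans ?_
    rw [mul_assoc, ← mul_pow, ← ENNReal.ofReal_mul (Real.sqrt_nonneg _)]
    gcongr
    apply Real.sqrt_le_iff.2
    refine ⟨by positivity, ?_⟩
    rw [mul_pow, Real.sq_sqrt hV0, mul_comm V, Real.coe_toNNReal', max_le_iff]
    exact ⟨cov_var_bound d hd α K hK a ha_nonneg M hM ha_meas ha_supp v hv ex hex hIntg N w x i L hL, by positivity⟩
  calc ∫⁻ ω, ‖∑ j, w j • F ω (x j)‖ₑ ^ p ∂P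
      ≤ ∫⁻ ω, (d:ENNReal) ^ p * ∑ i, ‖(∑ j, w j • F ω (x j)) i‖ₑ ^ p ∂P :=
        lintegral_mono fun ω => norm_pow_le_coord p _ (by lia)
    _ = (d:ENNReal) ^ p * ∑ i, ∫⁻ ω, ‖(∑ j, w j • F ω (x j)) i‖ₑ ^ p ∂P := by
        rw [lintegral_const_mul _ (by fun_prop), lintegral_finsetSum _ (fun i _ => by fun_prop)]
    _ ≤ (d:ENNReal) ^ p * ∑ i : Fin d, (m * ENNReal.ofReal (Real.sqrt V) ^ p) * ENNReal.ofReal L ^ p := by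
        gcongr with i _; exact hcoord i
    _ = _ := by simp; ring

lemma geom_bound (n : ℕ) (φ : ℝ) (h0 : φ ≠ 0) (hφ : |φ| ≤ Real.pi) :
    ‖∑ j ∈ Finset.range n, Complex.exp (Complex.I * φ) ^ j‖ ≤ Real.pi / |φ| := by
  have h1 : ‖Complex.exp (Complex.I * φ) - 1‖ = 2 * |Real.sin (φ/2)| := by
    rw [Complex.norm_exp_I_mul_ofReal_sub_one, norm_mul]; simp
  have h2 : |φ| / Real.pi ≤ |Real.sin (φ/2)| := by
    have : |Real.sin (φ/2)| = Real.sin (|φ|/2) := by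
      rcases le_total 0 φ with h | h
      · rw [abs_of_nonneg h] at hφ ⊢
        exact abs_of_nonneg (Real.sin_nonneg_of_nonneg_of_le_pi (by linarith) (by linarith))
      · rw [abs_of_nonpos h] at hφ ⊢
        rw [neg_div, Real.sin_neg]
        apply abs_of_nonpos
        have := Real.sin_nonneg_of_nonneg_of_le_pi (x := -φ/2) (by linarith) (by linarith)
        rw [neg_div, Real.sin_neg] at this; linarith
    rw [this]
    have := Real.mul_le_sin (x := |φ|/2) (by positivity) (by linarith)
    calc |φ| / Real.pi = 2 / Real.pi * (|φ| / 2) := by ring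
      _ ≤ _ := this
  have hpos : 0 < |φ| := abs_pos.2 h0
  have hpi := Real.pi_pos
  have h3 : ‖∑ j ∈ Finset.range n, Complex.exp (Complex.I * φ) ^ j‖ * (2 * |Real.sin (φ/2)|) ≤ 2 := by
    rw [← h1, ← norm_mul, geom_sum_mul]
    refine (norm_sub_le _ _).trans ?_
    rw [norm_pow, mul_comm Complex.I, Complex.norm_exp_ofReal_mul_I]; norm_num
  set G := ‖∑ j ∈ Finset.range n, Complex.exp (Complex.I * φ) ^ j‖
  have hG : 0 ≤ G := norm_nonneg _
  rw [le_div_iff₀ hpos]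
  have h4 : G * (|φ| / Real.pi) ≤ 1 := by
    have := mul_le_mul_of_nonneg_left h2 hG
    linarith
  rw [mul_div_assoc', div_le_one hpi] at h4
  exact h4

lemma sq_sum_eq {ι : Type} [Fintype ι] (w θ : ι → ℝ) :
    (∑ j, w j * Real.cos (θ j)) ^ 2 + (∑ j, w j * Real.sin (θ j)) ^ 2 =
      ‖∑ j, (w j : ℂ) * Complex.exp (Complex.I * θ j)‖ ^ 2 := by
  rw [← Complex.normSq_eq_norm_sq, Complex.normSq_apply]
  have : ∀ j, (w j : ℂ) * Complex.exp (Complex.I * θ j) =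
      ((w j * Real.cos (θ j) : ℝ) : ℂ) + ((w j * Real.sin (θ j) : ℝ) : ℂ) * Complex.I := by
    intro j
    rw [mul_comm Complex.I, Complex.exp_mul_I]; push_cast; ring
  simp_rw [this]
  rw [Finset.sum_add_distrib, ← Finset.sum_mul, ← Complex.ofReal_sum, ← Complex.ofReal_sum]
  simp only [Complex.add_re, Complex.add_im, Complex.re_ofReal_mul, Complex.im_ofReal_mul, Complex.ofReal_re, Complex.ofReal_im, Complex.I_re, Complex.I_im]
  ring

lemma interp_bound (β G l θ : ℝ) (hβ0 : 0 ≤ β) (hβ1 : β ≤ 1) (hG : 0 ≤ G) (hl : 0 ≤ l) (hθ : 0 < θ)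
    (h1 : G ≤ l) (h2 : G ≤ Real.pi / θ) :
    G ^ 2 ≤ (l ^ β * Real.pi ^ (1 - β)) ^ 2 * θ ^ (-(2 - 2 * β)) := by
  have hpi := Real.pi_pos
  have h : G ≤ l ^ β * (Real.pi / θ) ^ (1 - β) := by
    rcases hG.eq_or_lt with h | h
    · rw [← h]; positivity
    calc G = G ^ β * G ^ (1 - β) := by rw [← Real.rpow_add h]; simp
      _ ≤ _ := by gcongr
  calc G ^ 2 ≤ (l ^ β * (Real.pi / θ) ^ (1 - β)) ^ 2 := by gcongr
    _ = _ := by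
      rw [Real.div_rpow hpi.le hθ.le, Real.rpow_neg hθ.le,
        show (2 - 2 * β) = (1 - β) * (2:ℕ) by push_cast; ring, Real.rpow_mul_natCast hθ.le]
      field_simp

lemma riemann_tendsto {E : Type*} [NormedAddCommGroup E] [NormedSpace ℝ E] [CompleteSpace E]
    (g : ℝ → E) (hg : Continuous g) (s l : ℝ) (hl : 0 < l) :
    Tendsto (fun n : ℕ => ∑ j ∈ Finset.range n, (l / n) • g (s + j * (l / n))) atTop
      (nhds (∫ r in s..(s + l), g r)) := by
  rw [Metric.tendsto_atTop]
  intro ε hε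
  have huc := isCompact_Icc.uniformContinuousOn_of_continuous (s := Icc s (s + l)) hg.continuousOn
  rw [Metric.uniformContinuousOn_iff] at huc
  obtain ⟨η, hη, H⟩ := huc (ε / (2 * l)) (by positivity)
  obtain ⟨N, hN⟩ := exists_nat_gt (l / η)
  refine ⟨N + 1, fun n hn => ?_⟩
  have hn0 : (0:ℝ) < n := by exact_mod_cast (by lia : 0 < n)
  have hnN : (N:ℝ) < n := by exact_mod_cast hn
  set h := l / n with hh
  have hh0 : 0 < h := by positivity
  have hhη : h < η := by
    rw [hh, div_lt_iff₀ hn0]; rw [div_lt_iff₀ hη] at hN; nlinarith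
  have hsum : ∫ r in s..(s + l), g r = ∑ j ∈ Finset.range n, ∫ r in (s + (j:ℕ) * h)..(s + ((j + 1 : ℕ):ℝ) * h), g r := by
    have := intervalIntegral.sum_integral_adjacent_intervals (f := g) (μ := volume) (a := fun j : ℕ => s + j * h) (n := n)
      (fun k _ => hg.intervalIntegrable _ _)
    rw [this]
    congr 1
    · simp
    · rw [hh]; field_simp
  rw [hsum, dist_eq_norm, ← Finset.sum_sub_distrib]
  have hterm : ∀ j ∈ Finset.range n, ‖h • g (s + j * h) - ∫ r in (s + (j:ℕ) * h)..(s + ((j + 1 : ℕ):ℝ) * h), g r‖ ≤ (ε / (2 * l)) * h := by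
    intro j hj
    have hjn : ((j:ℝ) + 1) ≤ n := by exact_mod_cast Finset.mem_range.1 hj
    have hj0 : (0:ℝ) ≤ j := by positivity
    have hle : s + (j:ℝ) * h ≤ s + ((j + 1 : ℕ):ℝ) * h := by push_cast; nlinarith
    have hnh : n * h = l := by rw [hh]; field_simp
    have : h • g (s + j * h) - ∫ r in (s + (j:ℕ) * h)..(s + ((j + 1 : ℕ):ℝ) * h), g r
        = ∫ r in (s + (j:ℕ) * h)..(s + ((j + 1 : ℕ):ℝ) * h), (g (s + j * h) - g r) := by
      rw [intervalIntegral.integral_sub (by simp) (hg.intervalIntegrable _ _), intervalIntegral.integral_const]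
      congr 2; push_cast; ring
    rw [this]
    refine (intervalIntegral.norm_integral_le_of_norm_le_const (C := ε / (2 * l)) ?_).trans ?_
    · intro r hr
      rw [uIoc_of_le hle] at hr
      have hr2 := hr.2
      push_cast at hr2
      rw [← dist_eq_norm]
      apply (H _ ⟨_, _⟩ _ ⟨_, _⟩ _).le
      · nlinarith
      · nlinarith
      · nlinarith [hr.1]
      · nlinarith
      · rw [Real.dist_eq, abs_lt]; constructor <;> nlinarith [hr.1]
    · apply le_of_eq; congr 1; push_cast; rw [abs_of_nonneg] <;> linarith
  calc _ ≤ ∑ j ∈ Finset.range n, (ε / (2 * l)) * h := norm_sum_le_of_le _ hterm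
    _ = ε / 2 := by simp [hh]; field_simp
    _ < ε := by linarith

/-- The moment bound, packaged. -/
def MomBound (d : ℕ) (K ex : ℝ) (v : EuclideanSpace ℝ (Fin d)) {Ω : Type*} [MeasurableSpace Ω] (P : Measure Ω)
    (F : Ω → EuclideanSpace ℝ (Fin d) → EuclideanSpace ℝ (Fin d)) (p : ℕ) (C : ENNReal) : Prop :=
  ∀ (N : ℕ) (w : Fin N → ℝ) (x : Fin N → EuclideanSpace ℝ (Fin d)) (L : ℝ), 0 ≤ L →
    (∀ k : EuclideanSpace ℝ (Fin d), ‖k‖ ≤ K → ⟪k, v⟫ ≠ 0 →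
      (∑ j, w j * Real.cos ⟪k, x j⟫) ^ 2 + (∑ j, w j * Real.sin ⟪k, x j⟫) ^ 2 ≤ L ^ 2 * |⟪k, v⟫| ^ (-ex)) →
    ∫⁻ ω, ‖∑ j, w j • F ω (x j)‖ₑ ^ p ∂P ≤ C * ENNReal.ofReal L ^ p

lemma MomBound.gen {d : ℕ} {K ex : ℝ} {v : EuclideanSpace ℝ (Fin d)} {Ω : Type*} [MeasurableSpace Ω] {P : Measure Ω}
    {F : Ω → EuclideanSpace ℝ (Fin d) → EuclideanSpace ℝ (Fin d)} {p : ℕ} {C : ENNReal}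
    (H : MomBound d K ex v P F p C) {ι : Type} [Fintype ι] (w : ι → ℝ)
    (x : ι → EuclideanSpace ℝ (Fin d)) (L : ℝ) (hL : 0 ≤ L)
    (hk : ∀ k : EuclideanSpace ℝ (Fin d), ‖k‖ ≤ K → ⟪k, v⟫ ≠ 0 →
      ‖∑ j, (w j : ℂ) * Complex.exp (Complex.I * (⟪k, x j⟫ : ℝ))‖ ^ 2 ≤ L ^ 2 * |⟪k, v⟫| ^ (-ex)) :
    ∫⁻ ω, ‖∑ j, w j • F ω (x j)‖ₑ ^ p ∂P ≤ C * ENNReal.ofReal L ^ p := by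
  let e := (Fintype.equivFin ι).symm
  have := H (Fintype.card ι) (w ∘ e) (x ∘ e) L hL (by
    intro k h1 h2
    rw [sq_sum_eq (w ∘ e) (fun j => ⟪k, (x ∘ e) j⟫)]
    have h3 := hk k h1 h2
    rw [← e.sum_comp] at h3
    exact h3)
  convert this using 4 with ω
  rw [← e.sum_comp]; rfl

lemma symbol_bound {d : ℕ} (k : EuclideanSpace ℝ (Fin d)) (K : ℝ) (hk : ‖k‖ ≤ K) (x w : EuclideanSpace ℝ (Fin d)) :
    ‖(1:ℂ) * Complex.exp (Complex.I * (⟪k, x + w⟫ : ℝ)) + (-1) * Complex.exp (Complex.I * (⟪k, x⟫ : ℝ))‖ ≤ K * ‖w‖ := by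
  rw [inner_add_right]
  have : (1:ℂ) * Complex.exp (Complex.I * ((⟪k, x⟫ + ⟪k, w⟫ : ℝ) : ℂ)) + (-1) * Complex.exp (Complex.I * (⟪k, x⟫ : ℝ))
    = Complex.exp (Complex.I * (⟪k, x⟫ : ℝ)) * (Complex.exp (Complex.I * (⟪k, w⟫ : ℝ)) - 1) := by
    push_cast; rw [mul_add, Complex.exp_add]; ring
  rw [this, norm_mul, mul_comm Complex.I, Complex.norm_exp_ofReal_mul_I, one_mul]
  refine (Real.norm_exp_I_mul_ofReal_sub_one_le).trans ?_
  exact (abs_real_inner_le_norm k w).trans (by gcongr)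

lemma point_moment {d : ℕ} {K ex : ℝ} (hK : 0 < K) (hex : 0 ≤ ex) {v : EuclideanSpace ℝ (Fin d)} (hv : ‖v‖ = 1)
    {Ω : Type*} [MeasurableSpace Ω] {P : Measure Ω}
    {F : Ω → EuclideanSpace ℝ (Fin d) → EuclideanSpace ℝ (Fin d)} {p : ℕ} {C : ENNReal}
    (H : MomBound d K ex v P F p C) (c1 c2 : ℝ) (x1 x2 : EuclideanSpace ℝ (Fin d)) (Q : ℝ) (hQ : 0 ≤ Q)
    (hk : ∀ k : EuclideanSpace ℝ (Fin d), ‖k‖ ≤ K →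
      ‖(c1:ℂ) * Complex.exp (Complex.I * (⟪k, x1⟫ : ℝ)) + c2 * Complex.exp (Complex.I * (⟪k, x2⟫ : ℝ))‖ ≤ Q) :
    ∫⁻ ω, ‖c1 • F ω x1 + c2 • F ω x2‖ₑ ^ p ∂P ≤ C * ENNReal.ofReal (Q * K ^ (ex / 2)) ^ p := by
  have := H.gen (ι := Fin 2) ![c1, c2] ![x1, x2] (Q * K ^ (ex / 2)) (by positivity) (by
    intro k h1 h2
    simp only [Fin.sum_univ_two, Matrix.cons_val_zero, Matrix.cons_val_one]
    have hθ : 0 < |⟪k, v⟫| := abs_pos.2 h2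
    have hθK : |⟪k, v⟫| ≤ K := (abs_real_inner_le_norm k v).trans (by rw [hv, mul_one]; exact h1)
    have h3 : 1 ≤ K ^ ex * |⟪k, v⟫| ^ (-ex) := by
        rw [Real.rpow_neg hθ.le, ← div_eq_mul_inv, one_le_div (by positivity)]
        exact Real.rpow_le_rpow hθ.le hθK hex
    have h4 : (K ^ (ex/2)) ^ 2 = K ^ ex := by
      rw [← Real.rpow_mul_natCast hK.le]; congr 1; push_cast; ring
    rw [mul_pow, h4, mul_assoc]
    calc _ ≤ Q ^ 2 := by gcongr; exact hk k h1
      _ ≤ _ := le_mul_of_one_le_right (by positivity) h3)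
  simpa [Fin.sum_univ_two] using this

lemma riem_moment {d : ℕ} {K β : ℝ} (hβ0 : 0 ≤ β) (hβ1 : β ≤ 1) {v : EuclideanSpace ℝ (Fin d)} (hv : ‖v‖ = 1)
    {Ω : Type*} [MeasurableSpace Ω] {P : Measure Ω}
    {F : Ω → EuclideanSpace ℝ (Fin d) → EuclideanSpace ℝ (Fin d)} {p : ℕ} {C : ENNReal}
    (H : MomBound d K (2 - 2 * β) v P F p C) (c1 c2 : ℝ) (x1 x2 : EuclideanSpace ℝ (Fin d)) (Q : ℝ) (hQ : 0 ≤ Q)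
    (hk : ∀ k : EuclideanSpace ℝ (Fin d), ‖k‖ ≤ K →
      ‖(c1:ℂ) * Complex.exp (Complex.I * (⟪k, x1⟫ : ℝ)) + c2 * Complex.exp (Complex.I * (⟪k, x2⟫ : ℝ))‖ ≤ Q)
    (s l : ℝ) (hl : 0 < l) (n : ℕ) (hn : 0 < n) (hnK : K * (l / n) ≤ Real.pi) :
    ∫⁻ ω, ‖∑ j ∈ Finset.range n, (l / n) • (c1 • F ω (x1 + (s + j * (l / n)) • v) + c2 • F ω (x2 + (s + j * (l / n)) • v))‖ₑ ^ p ∂P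
      ≤ C * ENNReal.ofReal (Q * (l ^ β * Real.pi ^ (1 - β))) ^ p := by
  have hn0 : (0:ℝ) < n := by exact_mod_cast hn
  set h := l / n with hh
  have hh0 : 0 < h := by positivity
  have := H.gen (ι := Fin n × Fin 2) (fun q => h * ![c1, c2] q.2) (fun q => ![x1, x2] q.2 + (s + q.1 * h) • v)
    (Q * (l ^ β * Real.pi ^ (1 - β))) (by positivity) (by
    intro k h1 h2
    have hθ : 0 < |⟪k, v⟫| := abs_pos.2 h2
    have hθK : |⟪k, v⟫| ≤ K := (abs_real_inner_le_norm k v).trans (by rw [hv, mul_one]; exact h1)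
    set θ := ⟪k, v⟫
    set G := ∑ j ∈ Finset.range n, Complex.exp (Complex.I * ((h * θ : ℝ) : ℂ)) ^ j with hG
    set Y := (c1:ℂ) * Complex.exp (Complex.I * (⟪k, x1⟫ : ℝ)) + c2 * Complex.exp (Complex.I * (⟪k, x2⟫ : ℝ)) with hY
    have hsum : ∑ q : Fin n × Fin 2, ((h * ![c1, c2] q.2 : ℝ) : ℂ) *
        Complex.exp (Complex.I * ((⟪k, ![x1, x2] q.2 + (s + q.1 * h) • v⟫ : ℝ) : ℂ))
        = Complex.exp (Complex.I * ((s * θ : ℝ) : ℂ)) * Y * (h * G) := by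
      rw [Fintype.sum_prod_type, hG, Finset.mul_sum, Finset.mul_sum, Finset.sum_range]
      refine Finset.sum_congr rfl fun j _ => ?_
      simp only [Fin.sum_univ_two, Matrix.cons_val_zero, Matrix.cons_val_one, inner_add_right, inner_smul_right]
      have he : ∀ z : ℝ, Complex.exp (Complex.I * ((z + (s + (j:ℕ) * h) * θ : ℝ) : ℂ)) =
          Complex.exp (Complex.I * ((s * θ : ℝ) : ℂ)) * Complex.exp (Complex.I * (z : ℂ)) *
            Complex.exp (Complex.I * ((h * θ : ℝ) : ℂ)) ^ (j:ℕ) := by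
        intro z
        rw [← Complex.exp_nat_mul, ← Complex.exp_add, ← Complex.exp_add]
        congr 1; push_cast; ring
      rw [he, he, hY]; push_cast; ring
    rw [hsum, norm_mul, norm_mul, mul_comm Complex.I, Complex.norm_exp_ofReal_mul_I, one_mul, mul_pow, mul_pow, mul_assoc]
    have hGn : ‖G‖ ≤ n := by
      refine (norm_sum_le _ _).trans ?_
      simp only [norm_pow, mul_comm Complex.I, Complex.norm_exp_ofReal_mul_I]
      simp
    have hG2 : ‖G‖ ≤ Real.pi / |h * θ| := by
      apply geom_bound
      · exact mul_ne_zero hh0.ne' h2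
      · rw [abs_mul, abs_of_pos hh0]
        calc h * |θ| ≤ h * K := by gcongr
          _ ≤ _ := by rw [mul_comm]; exact hnK
    have hhG : ‖(h:ℂ) * G‖ = h * ‖G‖ := by rw [norm_mul]; simp [abs_of_pos hh0]
    have hY2 : ‖Y‖ ≤ Q := hk k h1
    gcongr
    apply interp_bound β _ l |θ| hβ0 hβ1 (norm_nonneg _) hl.le hθ
    · rw [hhG]
      calc h * ‖G‖ ≤ h * n := by gcongr
        _ = l := by rw [hh]; field_simp
    · rw [hhG]
      calc h * ‖G‖ ≤ h * (Real.pi / |h * θ|) := by gcongr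
        _ = Real.pi / |θ| := by rw [abs_mul, abs_of_pos hh0]; field_simp)
  convert this using 4 with ω
  rw [Fintype.sum_prod_type, Finset.sum_range]
  refine congrArg _ (Finset.sum_congr rfl fun j _ => ?_)
  simp [Fin.sum_univ_two, smul_add, mul_smul]

/-- Time integrated field. -/
noncomputable def AA {d : ℕ} (v : EuclideanSpace ℝ (Fin d))
    (f : EuclideanSpace ℝ (Fin d) → EuclideanSpace ℝ (Fin d)) (s t : ℝ) (x : EuclideanSpace ℝ (Fin d)) :
    EuclideanSpace ℝ (Fin d) := ∫ r in s..t, f (x + r • v)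

lemma AA_moment {d : ℕ} {K β : ℝ} (hβ0 : 0 ≤ β) (hβ1 : β ≤ 1) {v : EuclideanSpace ℝ (Fin d)} (hv : ‖v‖ = 1)
    {Ω : Type*} [MeasurableSpace Ω] {P : Measure Ω}
    {F : Ω → EuclideanSpace ℝ (Fin d) → EuclideanSpace ℝ (Fin d)} {p : ℕ} {C : ENNReal}
    (hF_meas : Measurable (Function.uncurry F)) (hF_cont : ∀ᵐ ω ∂P, Continuous (F ω))
    (H : MomBound d K (2 - 2 * β) v P F p C) (c1 c2 : ℝ) (x1 x2 : EuclideanSpace ℝ (Fin d)) (Q : ℝ) (hQ : 0 ≤ Q)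
    (hk : ∀ k : EuclideanSpace ℝ (Fin d), ‖k‖ ≤ K →
      ‖(c1:ℂ) * Complex.exp (Complex.I * (⟪k, x1⟫ : ℝ)) + c2 * Complex.exp (Complex.I * (⟪k, x2⟫ : ℝ))‖ ≤ Q)
    (s l : ℝ) (hl : 0 < l) :
    ∫⁻ ω, ‖c1 • AA v (F ω) s (s + l) x1 + c2 • AA v (F ω) s (s + l) x2‖ₑ ^ p ∂P
      ≤ C * ENNReal.ofReal (Q * (l ^ β * Real.pi ^ (1 - β))) ^ p := by
  have hFx : ∀ y, Measurable fun ω => F ω y := fun y => hF_meas.comp (measurable_id.prodMk measurable_const)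
  set Z : ℕ → Ω → ENNReal := fun n ω => ‖∑ j ∈ Finset.range n, (l / n) • (c1 • F ω (x1 + (s + j * (l / n)) • v) + c2 • F ω (x2 + (s + j * (l / n)) • v))‖ₑ ^ p with hZ
  have hae : ∀ᵐ ω ∂P, ‖c1 • AA v (F ω) s (s + l) x1 + c2 • AA v (F ω) s (s + l) x2‖ₑ ^ p = liminf (fun n => Z n ω) atTop := by
    filter_upwards [hF_cont] with ω hω
    symm
    apply Tendsto.liminf_eq
    have hc : ∀ y : EuclideanSpace ℝ (Fin d), Continuous fun r : ℝ => F ω (y + r • v) := fun y => by fun_prop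
    have h1 := riemann_tendsto (fun r => c1 • F ω (x1 + r • v) + c2 • F ω (x2 + r • v))
      (((hc x1).const_smul c1).add ((hc x2).const_smul c2)) s l hl
    have h2 : ∫ r in s..(s + l), (c1 • F ω (x1 + r • v) + c2 • F ω (x2 + r • v)) =
        c1 • AA v (F ω) s (s + l) x1 + c2 • AA v (F ω) s (s + l) x2 := by
      have i1 : IntervalIntegrable (fun r => c1 • F ω (x1 + r • v)) volume s (s + l) :=
        ((hc x1).const_smul c1).intervalIntegrable _ _
      have i2 : IntervalIntegrable (fun r => c2 • F ω (x2 + r • v)) volume s (s + l) :=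
        ((hc x2).const_smul c2).intervalIntegrable _ _
      rw [intervalIntegral.integral_add i1 i2, intervalIntegral.integral_smul, intervalIntegral.integral_smul]
      rfl
    rw [h2] at h1
    exact ((ENNReal.continuous_pow p).tendsto _).comp h1.enorm
  rw [lintegral_congr_ae hae]
  refine (lintegral_liminf_le fun n => by fun_prop).trans ?_
  refine liminf_le_of_frequently_le' (Eventually.frequently ?_)
  obtain ⟨N, hN⟩ := exists_nat_gt (K * l / Real.pi)
  filter_upwards [eventually_ge_atTop (N+1)] with n hn
  have hn0 : (0:ℝ) < n := by exact_mod_cast (by lia : 0 < n)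
  have hnN : (N:ℝ) < n := by exact_mod_cast hn
  apply riem_moment hβ0 hβ1 hv H c1 c2 x1 x2 Q hQ hk s l hl n (by lia)
  rw [div_lt_iff₀ Real.pi_pos] at hN
  rw [mul_div_assoc', div_le_iff₀ hn0]
  nlinarith [Real.pi_pos]

lemma jensen_pow {α : Type*} [MeasurableSpace α] (μ : Measure α) [IsProbabilityMeasure μ] (g : α → ENNReal)
    (hg : Measurable g) (p : ℕ) (hp : 1 ≤ p) : (∫⁻ x, g x ∂μ) ^ p ≤ ∫⁻ x, g x ^ p ∂μ := by
  have hp0 : (0:ℝ) < p := by exact_mod_cast hp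
  have h := eLpNorm'_le_eLpNorm'_of_exponent_le (p := 1) (q := (p:ℝ)) one_pos (by exact_mod_cast hp) μ
    (f := g) hg.aestronglyMeasurable
  simp only [eLpNorm', ENNReal.rpow_one, div_one, enorm_eq_self, ENNReal.rpow_natCast] at h
  calc (∫⁻ x, g x ∂μ) ^ p ≤ ((∫⁻ x, g x ^ p ∂μ) ^ (1 / (p:ℝ))) ^ p := by gcongr
    _ = _ := by
      rw [← ENNReal.rpow_natCast, ← ENNReal.rpow_mul, one_div, inv_mul_cancel₀ hp0.ne', ENNReal.rpow_one]

noncomputable def WW {d : ℕ} (u : EuclideanSpace ℝ (Fin d)) : ENNReal :=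
  ENNReal.ofReal ((1 + ‖u‖) ^ (-((d:ℝ) + 1)))

lemma WW_meas {d : ℕ} : Measurable (WW (d := d)) := by
  unfold WW; fun_prop

lemma WW_fin {d : ℕ} : ∫⁻ u, WW (d := d) u ≠ ⊤ := by
  have h : Integrable (fun x : EuclideanSpace ℝ (Fin d) => (1 + ‖x‖) ^ (-((d:ℝ) + 1))) :=
    integrable_one_add_norm (by simp)
  exact h.lintegral_lt_top.ne

lemma WW_ge {d : ℕ} (x u : EuclideanSpace ℝ (Fin d)) (h : ‖u - x‖ ≤ 1) :
    1 ≤ ENNReal.ofReal ((2 + ‖x‖) ^ ((d:ℝ) + 1)) * WW u := by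
  unfold WW
  rw [← ENNReal.ofReal_mul (by positivity), ← ENNReal.ofReal_one]
  apply ENNReal.ofReal_le_ofReal
  rw [Real.rpow_neg (by positivity), ← div_eq_mul_inv, one_le_div (by positivity)]
  apply Real.rpow_le_rpow (by positivity) _ (by positivity)
  have : ‖u‖ ≤ ‖u - x‖ + ‖x‖ := by simpa using norm_add_le (u - x) x
  linarith

noncomputable def Ns {d : ℕ} (p : ℕ) (f : EuclideanSpace ℝ (Fin d) → EuclideanSpace ℝ (Fin d)) : ENNReal :=
  (∫⁻ u, WW u * ‖f u‖ₑ ^ p) +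
  ∫⁻ u, ∫⁻ w in Metric.closedBall 0 3, WW u * (‖f (u + w) - f u‖ₑ / ‖w‖ₑ) ^ p

lemma volB {d : ℕ} (x : EuclideanSpace ℝ (Fin d)) (r : ℝ) (hr : 0 < r) :
    volume (Metric.closedBall x r) ≠ 0 ∧ volume (Metric.closedBall x r) ≠ ⊤ := by
  refine ⟨(Metric.measure_closedBall_pos _ _ hr).ne', measure_closedBall_lt_top.ne⟩

lemma condP {d : ℕ} (x : EuclideanSpace ℝ (Fin d)) (r : ℝ) (hr : 0 < r) :
    IsProbabilityMeasure (cond volume (Metric.closedBall x r)) :=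
  cond_isProbabilityMeasure_of_finite (volB x r hr).1 (volB x r hr).2

lemma condInt {d : ℕ} (x : EuclideanSpace ℝ (Fin d)) (r : ℝ) (hr : 0 < r)
    (f : EuclideanSpace ℝ (Fin d) → EuclideanSpace ℝ (Fin d)) (hf : Continuous f) :
    Integrable f (cond volume (Metric.closedBall x r)) := by
  unfold ProbabilityTheory.cond
  apply Integrable.smul_measure
  · exact hf.continuousOn.integrableOn_compact (isCompact_closedBall x r)
  · exact ENNReal.inv_ne_top.2 (volB x r hr).1

lemma condL {d : ℕ} (x : EuclideanSpace ℝ (Fin d)) (r : ℝ) (g : EuclideanSpace ℝ (Fin d) → ENNReal) :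
    ∫⁻ u, g u ∂(cond volume (Metric.closedBall x r)) = (volume (Metric.closedBall x r))⁻¹ * ∫⁻ u in Metric.closedBall x r, g u := by
  unfold ProbabilityTheory.cond
  rw [lintegral_smul_measure, smul_eq_mul]

noncomputable def avg {d : ℕ} (f : EuclideanSpace ℝ (Fin d) → EuclideanSpace ℝ (Fin d))
  (x : EuclideanSpace ℝ (Fin d)) (r : ℝ) : EuclideanSpace ℝ (Fin d) :=
  ∫ u, f u ∂(cond volume (Metric.closedBall x r))

lemma avg_bound {d p : ℕ} (hp : 1 ≤ p) {f : EuclideanSpace ℝ (Fin d) → EuclideanSpace ℝ (Fin d)} (hf : Continuous f)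
    (x : EuclideanSpace ℝ (Fin d)) :
    ‖avg f x 1‖ₑ ^ p ≤ (volume (Metric.closedBall x 1))⁻¹ * (ENNReal.ofReal ((2 + ‖x‖) ^ ((d:ℝ) + 1)) * Ns p f) := by
  have := condP x 1 one_pos
  calc ‖avg f x 1‖ₑ ^ p ≤ (∫⁻ u, ‖f u‖ₑ ∂(cond volume (Metric.closedBall x 1))) ^ p := by
        gcongr; exact enorm_integral_le_lintegral_enorm _
    _ ≤ ∫⁻ u, ‖f u‖ₑ ^ p ∂(cond volume (Metric.closedBall x 1)) := jensen_pow _ _ (by fun_prop) p hp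
    _ = (volume (Metric.closedBall x 1))⁻¹ * ∫⁻ u in Metric.closedBall x 1, ‖f u‖ₑ ^ p := condL _ _ _
    _ ≤ (volume (Metric.closedBall x 1))⁻¹ * (ENNReal.ofReal ((2 + ‖x‖) ^ ((d:ℝ) + 1)) * Ns p f) := by
      gcongr
      calc ∫⁻ u in Metric.closedBall x 1, ‖f u‖ₑ ^ p
        ≤ ∫⁻ u in Metric.closedBall x 1, ENNReal.ofReal ((2 + ‖x‖) ^ ((d:ℝ) + 1)) * (WW u * ‖f u‖ₑ ^ p) := by
            apply setLIntegral_mono' measurableSet_closedBall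
            intro u hu
            rw [← mul_assoc]
            exact le_mul_of_one_le_left' (WW_ge x u (by simpa [dist_eq_norm] using hu))
        _ ≤ ∫⁻ u, ENNReal.ofReal ((2 + ‖x‖) ^ ((d:ℝ) + 1)) * (WW u * ‖f u‖ₑ ^ p) := setLIntegral_le_lintegral _ _
        _ = ENNReal.ofReal ((2 + ‖x‖) ^ ((d:ℝ) + 1)) * ∫⁻ u, (WW u * ‖f u‖ₑ ^ p) :=
          lintegral_const_mul' _ _ ENNReal.ofReal_ne_top
        _ ≤ _ := by gcongr; exact le_self_add

lemma avg_pair {d p : ℕ} (hp : 1 ≤ p) {f : EuclideanSpace ℝ (Fin d) → EuclideanSpace ℝ (Fin d)} (hf : Continuous f)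
    (x1 x2 : EuclideanSpace ℝ (Fin d)) (r1 r2 ρ : ℝ) (hr1 : 0 < r1) (hr2 : 0 < r2) (hr1' : r1 ≤ 1) (hρ : ρ ≤ 3)
    (hd : ∀ u u', ‖u - x1‖ ≤ r1 → ‖u' - x2‖ ≤ r2 → ‖u' - u‖ ≤ ρ) :
    ‖avg f x1 r1 - avg f x2 r2‖ₑ ^ p ≤ (volume (Metric.closedBall x1 r1))⁻¹ * ((volume (Metric.closedBall x2 r2))⁻¹ *
      (ENNReal.ofReal ρ ^ p * (ENNReal.ofReal ((2 + ‖x1‖) ^ ((d:ℝ) + 1)) * Ns p f))) := by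
  have := condP x1 r1 hr1
  have := condP x2 r2 hr2
  set μ1 := cond volume (Metric.closedBall x1 r1)
  set μ2 := cond volume (Metric.closedBall x2 r2)
  have i1 : Integrable f μ1 := condInt x1 r1 hr1 f hf
  have i2 : Integrable f μ2 := condInt x2 r2 hr2 f hf
  have e1 : avg f x1 r1 - avg f x2 r2 = ∫ u, (∫ u', (f u - f u') ∂μ2) ∂μ1 := by
    have : ∀ u, ∫ u', (f u - f u') ∂μ2 = f u - avg f x2 r2 := by
      intro u
      rw [integral_sub (integrable_const _) i2]; simp [avg, μ2]
    simp_rw [this]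
    rw [integral_sub i1 (integrable_const _)]; simp [avg, μ1]
  have m2 : Measurable fun z : EuclideanSpace ℝ (Fin d) × EuclideanSpace ℝ (Fin d) => ‖f z.1 - f z.2‖ₑ := by
    apply Continuous.measurable; fun_prop
  have m1 : Measurable fun u => ∫⁻ u', ‖f u - f u'‖ₑ ∂μ2 := Measurable.lintegral_prod_right m2
  have key : ∀ u ∈ Metric.closedBall x1 r1, ∫⁻ u' in Metric.closedBall x2 r2, ‖f u - f u'‖ₑ ^ p ≤
      ENNReal.ofReal ρ ^ p * (ENNReal.ofReal ((2 + ‖x1‖) ^ ((d:ℝ) + 1)) *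
        ∫⁻ w in Metric.closedBall 0 3, WW u * (‖f (u + w) - f u‖ₑ / ‖w‖ₑ) ^ p) := by
    intro u hu
    have hu' : ‖u - x1‖ ≤ r1 := by simpa [dist_eq_norm] using hu
    rw [← lintegral_indicator measurableSet_closedBall, ← lintegral_add_left_eq_self _ u,
      ← lintegral_const_mul' _ _ ENNReal.ofReal_ne_top, ← lintegral_const_mul' _ _ (by finiteness),
      ← lintegral_indicator measurableSet_closedBall]
    apply lintegral_mono
    intro w
    by_cases hw : u + w ∈ Metric.closedBall x2 r2
    · have hw' : ‖w‖ ≤ ρ := by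
        simpa using hd u (u + w) hu' (by simpa [dist_eq_norm] using hw)
      have hw3 : w ∈ Metric.closedBall (0 : EuclideanSpace ℝ (Fin d)) 3 := by simpa using hw'.trans hρ
      simp only [indicator_of_mem hw, indicator_of_mem hw3]
      have hW := WW_ge x1 u (hu'.trans hr1')
      have h1 : ‖f u - f (u + w)‖ₑ ≤ ENNReal.ofReal ρ * (‖f (u + w) - f u‖ₑ / ‖w‖ₑ) := by
        rcases eq_or_ne w 0 with rfl | hw0
        · simp
        rw [← neg_sub, enorm_neg]
        calc ‖f (u + w) - f u‖ₑ = ‖w‖ₑ * (‖f (u + w) - f u‖ₑ / ‖w‖ₑ) := by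
              rw [ENNReal.mul_div_cancel (by simpa using hw0) (by finiteness)]
          _ ≤ _ := by
            gcongr
            rw [← ofReal_norm]; exact ENNReal.ofReal_le_ofReal hw'
      calc ‖f u - f (u + w)‖ₑ ^ p ≤ (ENNReal.ofReal ρ * (‖f (u + w) - f u‖ₑ / ‖w‖ₑ)) ^ p := by gcongr
        _ = ENNReal.ofReal ρ ^ p * (1 * (‖f (u + w) - f u‖ₑ / ‖w‖ₑ) ^ p) := by rw [mul_pow, one_mul]
        _ ≤ ENNReal.ofReal ρ ^ p * ((ENNReal.ofReal ((2 + ‖x1‖) ^ ((d:ℝ) + 1)) * WW u) * (‖f (u + w) - f u‖ₑ / ‖w‖ₑ) ^ p) := by gcongr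
        _ = _ := by ring
    · simp [indicator_of_notMem hw]
  calc ‖avg f x1 r1 - avg f x2 r2‖ₑ ^ p ≤ (∫⁻ u, (∫⁻ u', ‖f u - f u'‖ₑ ∂μ2) ∂μ1) ^ p := by
        rw [e1]; gcongr
        refine (enorm_integral_le_lintegral_enorm _).trans (lintegral_mono fun u => ?_)
        exact enorm_integral_le_lintegral_enorm _
    _ ≤ ∫⁻ u, (∫⁻ u', ‖f u - f u'‖ₑ ∂μ2) ^ p ∂μ1 := jensen_pow _ _ m1 p hp
    _ ≤ ∫⁻ u, (∫⁻ u', ‖f u - f u'‖ₑ ^ p ∂μ2) ∂μ1 := by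
        refine lintegral_mono fun u => ?_
        exact jensen_pow _ _ (by fun_prop) p hp
    _ = (volume (Metric.closedBall x1 r1))⁻¹ * ((volume (Metric.closedBall x2 r2))⁻¹ *
        ∫⁻ u in Metric.closedBall x1 r1, ∫⁻ u' in Metric.closedBall x2 r2, ‖f u - f u'‖ₑ ^ p) := by
        rw [condL]; congr 1
        simp_rw [μ2, condL]
        rw [lintegral_const_mul' _ _ (ENNReal.inv_ne_top.2 (volB x2 r2 hr2).1)]
    _ ≤ _ := by
        gcongr
        calc _ ≤ ∫⁻ u in Metric.closedBall x1 r1, ENNReal.ofReal ρ ^ p * (ENNReal.ofReal ((2 + ‖x1‖) ^ ((d:ℝ) + 1)) *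
              ∫⁻ w in Metric.closedBall 0 3, WW u * (‖f (u + w) - f u‖ₑ / ‖w‖ₑ) ^ p) :=
              setLIntegral_mono' measurableSet_closedBall key
          _ ≤ ∫⁻ u, ENNReal.ofReal ρ ^ p * (ENNReal.ofReal ((2 + ‖x1‖) ^ ((d:ℝ) + 1)) *
              ∫⁻ w in Metric.closedBall 0 3, WW u * (‖f (u + w) - f u‖ₑ / ‖w‖ₑ) ^ p) := setLIntegral_le_lintegral _ _
          _ = ENNReal.ofReal ρ ^ p * (ENNReal.ofReal ((2 + ‖x1‖) ^ ((d:ℝ) + 1)) * ∫⁻ u,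
              ∫⁻ w in Metric.closedBall 0 3, WW u * (‖f (u + w) - f u‖ₑ / ‖w‖ₑ) ^ p) := by
              rw [lintegral_const_mul' _ _ (by finiteness), lintegral_const_mul' _ _ (by finiteness)]
          _ ≤ _ := by gcongr; exact le_add_self

lemma volB_real {d : ℕ} (x : EuclideanSpace ℝ (Fin d)) (r : ℝ) (hr : 0 < r) :
    volume (Metric.closedBall x r) = ENNReal.ofReal (r ^ d * (volume (Metric.closedBall (0:EuclideanSpace ℝ (Fin d)) 1)).toReal) := by
  rw [Measure.addHaar_closedBall' volume x hr.le, ENNReal.ofReal_mul (by positivity), ENNReal.ofReal_toReal (volB 0 1 one_pos).2]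
  simp

lemma enorm_pow_le_real {E : Type*} [NormedAddCommGroup E] (z : E) (p : ℕ) (hp : 1 ≤ p) (Q : ℝ) (hQ : 0 ≤ Q)
    (h : ‖z‖ₑ ^ p ≤ ENNReal.ofReal Q) : ‖z‖ ≤ Q ^ (1 / (p:ℝ)) := by
  rw [← ofReal_norm, ← ENNReal.ofReal_pow (norm_nonneg _), ENNReal.ofReal_le_ofReal_iff hQ] at h
  calc ‖z‖ = (‖z‖ ^ p) ^ (1 / (p:ℝ)) := by
        rw [one_div, Real.pow_rpow_inv_natCast (norm_nonneg _) (by omega)]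
    _ ≤ _ := by gcongr

lemma avg_pair_real {d p : ℕ} (hp : 1 ≤ p) {f : EuclideanSpace ℝ (Fin d) → EuclideanSpace ℝ (Fin d)} (hf : Continuous f)
    (S : ℝ) (hS : 0 ≤ S) (hN : Ns p f ≤ ENNReal.ofReal S) (R : ℝ)
    (x1 x2 : EuclideanSpace ℝ (Fin d)) (hx1 : ‖x1‖ ≤ R) (r1 r2 ρ : ℝ) (hρ0 : 0 < ρ) (hr1' : r1 ≤ 1) (hρ : ρ ≤ 3)
    (h1 : ρ ≤ 4 * r1) (h2 : ρ ≤ 4 * r2)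
    (hd : ∀ u u', ‖u - x1‖ ≤ r1 → ‖u' - x2‖ ≤ r2 → ‖u' - u‖ ≤ ρ) :
    ‖avg f x1 r1 - avg f x2 r2‖ ≤
      (16 ^ d * (volume (Metric.closedBall (0:EuclideanSpace ℝ (Fin d)) 1)).toReal⁻¹ ^ 2) ^ (1 / (p:ℝ)) *
        (2 + R) ^ (((d:ℝ) + 1) / p) * S ^ (1 / (p:ℝ)) * ρ ^ (1 - 2 * (d:ℝ) / p) := by
  have hr1 : 0 < r1 := by linarith
  have hr2 : 0 < r2 := by linarith
  have hp0 : (0:ℝ) < p := by exact_mod_cast hp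
  have hR : 0 ≤ R := (norm_nonneg _).trans hx1
  have H := avg_pair hp hf x1 x2 r1 r2 ρ hr1 hr2 hr1' hρ hd
  rw [volB_real _ _ hr1, volB_real _ _ hr2] at H
  set V := (volume (Metric.closedBall (0:EuclideanSpace ℝ (Fin d)) 1)).toReal with hV
  have hVpos : 0 < V := ENNReal.toReal_pos (volB 0 1 one_pos).1 (volB 0 1 one_pos).2
  have H2 : ‖avg f x1 r1 - avg f x2 r2‖ₑ ^ p ≤ ENNReal.ofReal ((r1 ^ d * V)⁻¹ * ((r2 ^ d * V)⁻¹ * (ρ ^ p * ((2 + ‖x1‖) ^ ((d:ℝ) + 1) * S)))) := by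
    refine H.trans ?_
    rw [ENNReal.ofReal_mul (p := (r1 ^ d * V)⁻¹) (by positivity), ENNReal.ofReal_mul (p := (r2 ^ d * V)⁻¹) (by positivity),
      ENNReal.ofReal_mul (p := ρ ^ p) (by positivity),
      ENNReal.ofReal_mul (p := (2 + ‖x1‖) ^ ((d:ℝ) + 1)) (by positivity), ENNReal.ofReal_inv_of_pos (by positivity), ENNReal.ofReal_inv_of_pos (by positivity),
      ENNReal.ofReal_pow hρ0.le]
    gcongr
  have H3 := enorm_pow_le_real _ p hp _ (by positivity) H2
  refine H3.trans ?_
  have e : (16 ^ d * V⁻¹ ^ 2) ^ (1 / (p:ℝ)) * (2 + R) ^ (((d:ℝ) + 1) / p) * S ^ (1 / (p:ℝ)) * ρ ^ (1 - 2 * (d:ℝ) / p)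
      = ((16 ^ d * V⁻¹ ^ 2) * (2 + R) ^ ((d:ℝ) + 1) * S * (ρ ^ p * (ρ ^ (2*d))⁻¹)) ^ (1 / (p:ℝ)) := by
    generalize hcc : (16 ^ d * V⁻¹ ^ 2) = cc
    have hcc0 : 0 ≤ cc := by rw [← hcc]; positivity
    rw [Real.mul_rpow (by positivity) (by positivity), Real.mul_rpow (by positivity) (by positivity),
      Real.mul_rpow (by positivity) (by positivity)]
    congr 1
    · congr 2
      rw [← Real.rpow_mul (by positivity)]; congr 1; ring
    · rw [← Real.rpow_natCast, ← Real.rpow_natCast, ← Real.rpow_neg hρ0.le, ← Real.rpow_add hρ0, ← Real.rpow_mul hρ0.le]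
      congr 1; push_cast; field_simp; ring
  rw [e]
  apply Real.rpow_le_rpow (by positivity) _ (by positivity)
  have q1 : (r1 ^ d)⁻¹ ≤ ((ρ/4) ^ d)⁻¹ := by gcongr; linarith
  have q2 : (r2 ^ d)⁻¹ ≤ ((ρ/4) ^ d)⁻¹ := by gcongr; linarith
  calc (r1 ^ d * V)⁻¹ * ((r2 ^ d * V)⁻¹ * (ρ ^ p * ((2 + ‖x1‖) ^ ((d:ℝ) + 1) * S)))
      = (r1 ^ d)⁻¹ * (r2 ^ d)⁻¹ * (V⁻¹ ^ 2 * (ρ ^ p * ((2 + ‖x1‖) ^ ((d:ℝ) + 1) * S))) := by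
        rw [mul_inv, mul_inv]; ring
    _ ≤ ((ρ/4) ^ d)⁻¹ * ((ρ/4) ^ d)⁻¹ * (V⁻¹ ^ 2 * (ρ ^ p * ((2 + R) ^ ((d:ℝ) + 1) * S))) := by gcongr
    _ = _ := by
      rw [div_pow, two_mul, pow_add, show (16:ℝ) = 4 * 4 by norm_num, mul_pow, inv_div]
      field_simp

lemma avg_tendsto {d : ℕ} {f : EuclideanSpace ℝ (Fin d) → EuclideanSpace ℝ (Fin d)} (hf : Continuous f)
    (x : EuclideanSpace ℝ (Fin d)) (r : ℕ → ℝ) (hr : ∀ n, 0 < r n) (hr0 : Tendsto r atTop (nhds 0)) :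
    Tendsto (fun n => avg f x (r n)) atTop (nhds (f x)) := by
  rw [Metric.tendsto_atTop]
  intro ε hε
  obtain ⟨η, hη, h⟩ := Metric.continuous_iff.1 hf x (ε/2) (by positivity)
  obtain ⟨N, hN⟩ := Metric.tendsto_atTop.1 hr0 η hη
  refine ⟨N, fun n hn => ?_⟩
  have := condP x (r n) (hr n)
  have h1 : avg f x (r n) - f x = ∫ u, (f u - f x) ∂(ProbabilityTheory.cond volume (Metric.closedBall x (r n))) := by
    rw [integral_sub (condInt x (r n) (hr n) f hf) (integrable_const _)]; simp [avg]
  rw [dist_eq_norm, h1]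
  refine lt_of_le_of_lt (norm_integral_le_of_norm_le_const (C := ε/2) ?_) (by simp; linarith)
  filter_upwards [ae_cond_mem (μ := volume) (s := Metric.closedBall x (r n)) measurableSet_closedBall] with u hu
  rw [← dist_eq_norm]
  have hlt := hN n hn
  rw [Real.dist_eq, sub_zero, abs_of_pos (hr n)] at hlt
  exact (h u (lt_of_le_of_lt hu hlt)).le

lemma avg_chain {d p : ℕ} (hp : 2 * d < p) {f : EuclideanSpace ℝ (Fin d) → EuclideanSpace ℝ (Fin d)} (hf : Continuous f)
    (S : ℝ) (hS : 0 ≤ S) (hN : Ns p f ≤ ENNReal.ofReal S) (R : ℝ)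
    (x : EuclideanSpace ℝ (Fin d)) (hx : ‖x‖ ≤ R) (r : ℝ) (hr0 : 0 < r) (hr : r ≤ 1) :
    ‖avg f x r - f x‖ ≤
      (16 ^ d * (volume (Metric.closedBall (0:EuclideanSpace ℝ (Fin d)) 1)).toReal⁻¹ ^ 2) ^ (1 / (p:ℝ)) *
        (2 + R) ^ (((d:ℝ) + 1) / p) * S ^ (1 / (p:ℝ)) * (2 * r) ^ (1 - 2 * (d:ℝ) / p) / (1 - (1/2) ^ (1 - 2 * (d:ℝ) / p)) := by
  have hp0 : (0:ℝ) < p := by exact_mod_cast (by omega : 0 < p)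
  have hR : 0 ≤ R := (norm_nonneg _).trans hx
  set η := 1 - 2 * (d:ℝ) / p with hη
  have hη0 : 0 < η := by
    rw [hη, sub_pos, div_lt_one hp0]; exact_mod_cast hp
  set M := (16 ^ d * (volume (Metric.closedBall (0:EuclideanSpace ℝ (Fin d)) 1)).toReal⁻¹ ^ 2) ^ (1 / (p:ℝ)) *
        (2 + R) ^ (((d:ℝ) + 1) / p) * S ^ (1 / (p:ℝ)) with hM
  have ht : Tendsto (fun n : ℕ => avg f x (r * (1/2) ^ n)) atTop (nhds (f x)) := by
    apply avg_tendsto hf x _ (fun n => by positivity)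
    have := (tendsto_pow_atTop_nhds_zero_of_lt_one (r := (1/2:ℝ)) (by norm_num) (by norm_num)).const_mul r
    simpa using this
  have hstep : ∀ n : ℕ, dist (avg f x (r * (1/2) ^ n)) (avg f x (r * (1/2) ^ (n+1))) ≤ (M * (2 * r) ^ η) * ((1/2) ^ η) ^ n := by
    intro n
    have hle : r * (1/2:ℝ) ^ n ≤ 1 := mul_le_one₀ hr (by positivity) (pow_le_one₀ (by norm_num) (by norm_num))
    have hpos : 0 < r * (1/2:ℝ) ^ n := by positivity
    have := avg_pair_real (by omega) hf S hS hN R x x hx (r * (1/2) ^ n) (r * (1/2) ^ (n+1)) (2 * r * (1/2) ^ n)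
      (by positivity) hle (by linarith) (by linarith) (by rw [pow_succ]; linarith) (by
        intro u u' h1 h2
        have h3 : ‖u' - u‖ ≤ ‖u' - x‖ + ‖u - x‖ := by
          have := norm_sub_le (u' - x) (u - x); simpa using this
        rw [pow_succ] at h2; linarith)
    rw [dist_eq_norm]
    refine this.trans (le_of_eq ?_)
    rw [← hM, mul_assoc M, Real.mul_rpow (x := 2 * r) (by positivity) (by positivity), ← Real.rpow_natCast (1/2) n, ← Real.rpow_natCast ((1/2)^η) n,
      ← Real.rpow_mul (by norm_num), ← Real.rpow_mul (by norm_num), mul_comm η]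
  have h2 : ((1/2:ℝ)) ^ η < 1 := Real.rpow_lt_one (by norm_num) (by norm_num) hη0
  have := dist_le_of_le_geometric_of_tendsto₀ _ _ h2 hstep ht
  simpa [dist_eq_norm] using this

lemma grr (d p : ℕ) (hp : 2 * d < p) : ∃ C : ℝ, 1 ≤ C ∧ ∀ f : EuclideanSpace ℝ (Fin d) → EuclideanSpace ℝ (Fin d),
    Continuous f → ∀ S : ℝ, 0 ≤ S → Ns p f ≤ ENNReal.ofReal S → ∀ R : ℝ, 
    (∀ x, ‖x‖ ≤ R → ‖f x‖ ≤ C * (2 + R) ^ (((d:ℝ) + 1) / p) * S ^ (1 / (p:ℝ))) ∧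
    (∀ x x', ‖x‖ ≤ R → ‖x'‖ ≤ R → ‖f x - f x'‖ ≤ C * (2 + R) ^ (((d:ℝ) + 1) / p) * S ^ (1 / (p:ℝ)) * ‖x - x'‖ ^ (1 - 2 * (d:ℝ) / p)) := by
  have hp0 : (0:ℝ) < p := by exact_mod_cast (by omega : 0 < p)
  set η := 1 - 2 * (d:ℝ) / p with hη
  have hη0 : 0 < η := by
    rw [hη, sub_pos, div_lt_one hp0]; exact_mod_cast hp
  have hη1 : η ≤ 1 := by rw [hη]; have : 0 ≤ 2 * (d:ℝ) / p := by positivity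
                         linarith
  set V := (volume (Metric.closedBall (0:EuclideanSpace ℝ (Fin d)) 1)).toReal with hV
  have hVpos : 0 < V := ENNReal.toReal_pos (volB 0 1 one_pos).1 (volB 0 1 one_pos).2
  set c1 := (16 ^ d * V⁻¹ ^ 2) ^ (1 / (p:ℝ)) with hc1
  have hc1p : 0 < c1 := by positivity
  set q := 1 - (1/2:ℝ) ^ η with hq
  have hqp : 0 < q := sub_pos.2 (Real.rpow_lt_one (by norm_num) (by norm_num) hη0)
  set A := (V⁻¹) ^ (1 / (p:ℝ)) + c1 * 2 / q with hA
  have hAp : 0 < A := by positivity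
  have h2η : (2:ℝ) ^ η ≤ 2 := by simpa using Real.rpow_le_rpow_of_exponent_le (x := 2) (by norm_num) hη1
  have h3η : (3:ℝ) ^ η ≤ 3 := by simpa using Real.rpow_le_rpow_of_exponent_le (x := 3) (by norm_num) hη1
  refine ⟨1 + 2 * A + (2 * (c1 * 2 / q) + c1 * 3), by have : 0 < (2 * (c1 * 2 / q) + c1 * 3) := by positivity
                                                      linarith, ?_⟩
  intro f hf S hS hN R
  have hsup : ∀ x, ‖x‖ ≤ R → ‖f x‖ ≤ A * ((2 + R) ^ (((d:ℝ) + 1) / p) * S ^ (1 / (p:ℝ))) := by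
    intro x hx
    have hR : 0 ≤ R := (norm_nonneg _).trans hx
    have h1 := avg_chain hp hf S hS hN R x hx 1 one_pos le_rfl
    rw [← hη, ← hV, ← hc1, ← hq, mul_one] at h1
    have h2 := avg_bound (p := p) (by omega) hf x
    rw [volB_real _ _ one_pos, ← hV, one_pow, one_mul] at h2
    have h3 : ‖avg f x 1‖ₑ ^ p ≤ ENNReal.ofReal (V⁻¹ * ((2 + R) ^ ((d:ℝ) + 1) * S)) := by
      refine h2.trans ?_
      rw [ENNReal.ofReal_mul (by positivity), ENNReal.ofReal_mul (by positivity), ENNReal.ofReal_inv_of_pos (by positivity)]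
      gcongr
    have h4 := enorm_pow_le_real _ p (by omega) _ (by positivity) h3
    have e : (V⁻¹ * ((2 + R) ^ ((d:ℝ) + 1) * S)) ^ (1 / (p:ℝ)) = V⁻¹ ^ (1 / (p:ℝ)) * ((2 + R) ^ (((d:ℝ) + 1) / p) * S ^ (1 / (p:ℝ))) := by
      rw [Real.mul_rpow (by positivity) (by positivity), Real.mul_rpow (by positivity) (by positivity), ← Real.rpow_mul (by positivity)]
      congr 3; ring
    rw [e] at h4
    have h5 : ‖f x‖ ≤ ‖avg f x 1‖ + ‖avg f x 1 - f x‖ := by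
      have := norm_sub_le (avg f x 1) (avg f x 1 - f x); simpa using this
    calc ‖f x‖ ≤ _ := h5
      _ ≤ V⁻¹ ^ (1 / (p:ℝ)) * ((2 + R) ^ (((d:ℝ) + 1) / p) * S ^ (1 / (p:ℝ))) + c1 * (2 + R) ^ (((d:ℝ) + 1) / p) * S ^ (1 / (p:ℝ)) * 2 / q := by
        refine add_le_add h4 (h1.trans ?_)
        gcongr
      _ = _ := by rw [hA]; ring
  refine ⟨fun x hx => ?_, fun x x' hx hx' => ?_⟩
  · have hR : 0 ≤ R := (norm_nonneg _).trans hx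
    refine (hsup x hx).trans ?_
    rw [mul_assoc (1 + 2 * A + _)]
    gcongr
    have : 0 < (2 * (c1 * 2 / q) + c1 * 3) := by positivity
    linarith
  have hR : 0 ≤ R := (norm_nonneg _).trans hx
  set m := (2 + R) ^ (((d:ℝ) + 1) / p) * S ^ (1 / (p:ℝ)) with hm
  have hm0 : 0 ≤ m := by positivity
  rw [mul_assoc (1 + 2 * A + _), ← hm]
  rcases eq_or_ne x x' with rfl | hne
  · simp [Real.zero_rpow hη0.ne']
  have hr : 0 < ‖x - x'‖ := norm_pos_iff.2 (sub_ne_zero.2 hne)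
  set r := ‖x - x'‖ with hrdef
  rcases le_or_gt r 1 with hr1 | hr1
  · have h1 := avg_chain hp hf S hS hN R x hx r hr hr1
    have h2 := avg_chain hp hf S hS hN R x' hx' r hr hr1
    have h3 := avg_pair_real (p := p) (by omega) hf S hS hN R x x' hx r r (3 * r) (by positivity) hr1 (by linarith) (by linarith) (by linarith)
      (by
        intro u u' h1 h2
        have h3 : u' - u = (u' - x') - (u - x) - (x - x') := by abel
        rw [h3]
        have h4 := norm_sub_le ((u' - x') - (u - x)) (x - x')
        have h5 := norm_sub_le (u' - x') (u - x)
        linarith)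
    rw [← hη, ← hV, ← hc1, ← hq, mul_assoc c1, ← hm, Real.mul_rpow (by norm_num) hr.le] at h1 h2
    rw [← hη, ← hV, ← hc1, mul_assoc c1, ← hm, Real.mul_rpow (by norm_num) hr.le] at h3
    have h0 : f x - f x' = (avg f x' r - f x') - (avg f x r - f x) + (avg f x r - avg f x' r) := by abel
    have hb : c1 * m * (2 ^ η * r ^ η) / q ≤ (c1 * 2 / q) * (m * r ^ η) := by
      calc c1 * m * (2 ^ η * r ^ η) / q ≤ c1 * m * (2 * r ^ η) / q := by gcongr
        _ = _ := by ring
    have hb3 : c1 * m * (3 ^ η * r ^ η) ≤ (c1 * 3) * (m * r ^ η) := by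
      calc c1 * m * (3 ^ η * r ^ η) ≤ c1 * m * (3 * r ^ η) := by gcongr
        _ = _ := by ring
    have n1 := norm_add_le ((avg f x' r - f x') - (avg f x r - f x)) (avg f x r - avg f x' r)
    have n2 := norm_sub_le (avg f x' r - f x') (avg f x r - f x)
    rw [h0]
    have hmr : 0 ≤ (1 + 2 * A) * (m * r ^ η) := by positivity
    nlinarith
  · have h1 := hsup x hx
    have h2 := hsup x' hx'
    have h3 := norm_sub_le (f x) (f x')
    have h4 : 1 ≤ r ^ η := Real.one_le_rpow hr1.le hη0.le
    have h5 : 0 < (2 * (c1 * 2 / q) + c1 * 3) := by positivity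
    calc _ ≤ 2 * A * m * 1 := by linarith
      _ ≤ (1 + 2 * A + (2 * (c1 * 2 / q) + c1 * 3)) * m * r ^ η := by gcongr; linarith

noncomputable def CW (d : ℕ) : ENNReal :=
  (∫⁻ u, WW (d := d) u) + (∫⁻ u, WW (d := d) u) * volume (Metric.closedBall (0 : EuclideanSpace ℝ (Fin d)) 3)

lemma CW_fin (d : ℕ) : CW d ≠ ⊤ := by
  unfold CW
  exact ENNReal.add_ne_top.2 ⟨WW_fin, ENNReal.mul_ne_top WW_fin (volB 0 3 (by norm_num)).2⟩

lemma Ns_meas {d p : ℕ} {Ω : Type*} [MeasurableSpace Ω]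
    {f : Ω → EuclideanSpace ℝ (Fin d) → EuclideanSpace ℝ (Fin d)} (hf : Measurable (Function.uncurry f)) :
    Measurable fun ω => Ns p (f ω) := by
  unfold Ns
  have hW := WW_meas (d := d)
  apply Measurable.add
  · apply Measurable.lintegral_prod_right
    exact (hW.comp measurable_snd).mul ((hf.enorm).pow_const p)
  · refine Measurable.lintegral_prod_right' (f := fun z : Ω × EuclideanSpace ℝ (Fin d) => ∫⁻ w in Metric.closedBall 0 3, WW z.2 * (‖f z.1 (z.2 + w) - f z.1 z.2‖ₑ / ‖w‖ₑ) ^ p) ?_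
    refine Measurable.lintegral_prod_right' (f := fun z : (Ω × EuclideanSpace ℝ (Fin d)) × EuclideanSpace ℝ (Fin d) => WW z.1.2 * (‖f z.1.1 (z.1.2 + z.2) - f z.1.1 z.1.2‖ₑ / ‖z.2‖ₑ) ^ p) ?_
    have h1 : Measurable fun z : (Ω × EuclideanSpace ℝ (Fin d)) × EuclideanSpace ℝ (Fin d) => f z.1.1 (z.1.2 + z.2) :=
      hf.comp ((measurable_fst.comp measurable_fst).prodMk ((measurable_snd.comp measurable_fst).add measurable_snd))
    have h2 : Measurable fun z : (Ω × EuclideanSpace ℝ (Fin d)) × EuclideanSpace ℝ (Fin d) => f z.1.1 z.1.2 :=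
      hf.comp measurable_fst
    exact (hW.comp (measurable_snd.comp measurable_fst)).mul ((((h1.sub h2).enorm).div measurable_snd.enorm).pow_const p)

lemma Ns_exp {d p : ℕ} (hp : 1 ≤ p) {Ω : Type*} [MeasurableSpace Ω] (P : Measure Ω) [SFinite P]
    {f : Ω → EuclideanSpace ℝ (Fin d) → EuclideanSpace ℝ (Fin d)} (hf : Measurable (Function.uncurry f)) (Λ : ENNReal)
    (h1 : ∀ x, ∫⁻ ω, ‖f ω x‖ₑ ^ p ∂P ≤ Λ) (h2 : ∀ x w, ∫⁻ ω, ‖f ω (x + w) - f ω x‖ₑ ^ p ∂P ≤ Λ * ‖w‖ₑ ^ p) :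
    ∫⁻ ω, Ns p (f ω) ∂P ≤ CW d * Λ := by
  have hW := WW_meas (d := d)
  have m1 : Measurable fun z : Ω × EuclideanSpace ℝ (Fin d) => WW z.2 * ‖f z.1 z.2‖ₑ ^ p :=
    (hW.comp measurable_snd).mul ((hf.enorm).pow_const p)
  have g1 : Measurable fun z : (Ω × EuclideanSpace ℝ (Fin d)) × EuclideanSpace ℝ (Fin d) => f z.1.1 (z.1.2 + z.2) :=
      hf.comp ((measurable_fst.comp measurable_fst).prodMk ((measurable_snd.comp measurable_fst).add measurable_snd))
  have g2 : Measurable fun z : (Ω × EuclideanSpace ℝ (Fin d)) × EuclideanSpace ℝ (Fin d) => f z.1.1 z.1.2 :=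
      hf.comp measurable_fst
  have m2 : Measurable fun z : (Ω × EuclideanSpace ℝ (Fin d)) × EuclideanSpace ℝ (Fin d) => WW z.1.2 * (‖f z.1.1 (z.1.2 + z.2) - f z.1.1 z.1.2‖ₑ / ‖z.2‖ₑ) ^ p :=
    (hW.comp (measurable_snd.comp measurable_fst)).mul ((((g1.sub g2).enorm).div measurable_snd.enorm).pow_const p)
  have m3 : Measurable fun z : Ω × EuclideanSpace ℝ (Fin d) => ∫⁻ w in Metric.closedBall 0 3, WW z.2 * (‖f z.1 (z.2 + w) - f z.1 z.2‖ₑ / ‖w‖ₑ) ^ p :=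
    Measurable.lintegral_prod_right m2
  have hfx : ∀ x, Measurable fun ω => f ω x := fun y => hf.comp (measurable_id.prodMk measurable_const)
  unfold Ns CW
  rw [lintegral_add_left (Measurable.lintegral_prod_right m1), add_mul]
  gcongr
  · rw [lintegral_lintegral_swap m1.aemeasurable, ← lintegral_mul_const _ hW]
    apply lintegral_mono
    intro u
    simp only
    rw [lintegral_const_mul _ ((hfx u).enorm.pow_const p)]
    gcongr; exact h1 u
  · rw [lintegral_lintegral_swap m3.aemeasurable]
    have : ∀ u : EuclideanSpace ℝ (Fin d), ∫⁻ ω, (∫⁻ w in Metric.closedBall 0 3, WW u * (‖f ω (u + w) - f ω u‖ₑ / ‖w‖ₑ) ^ p) ∂P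
        ≤ WW u * (Λ * volume (Metric.closedBall (0 : EuclideanSpace ℝ (Fin d)) 3)) := by
      intro u
      rw [lintegral_lintegral_swap]
      · rw [← mul_assoc, ← setLIntegral_const]
        apply lintegral_mono
        intro w
        simp only
        have hfw : Measurable fun ω => ‖f ω (u + w) - f ω u‖ₑ := ((hfx (u + w)).sub (hfx u)).enorm
        rw [lintegral_const_mul _ ((hfw.div_const _).pow_const p)]
        gcongr
        rcases eq_or_ne w 0 with rfl | hw
        · simp [show p ≠ 0 by omega]
        · have hw1 : ‖w‖ₑ ≠ 0 := by simpa using hw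
          have hw2 : ‖w‖ₑ ≠ ⊤ := by finiteness
          simp_rw [ENNReal.div_eq_inv_mul, mul_pow]
          rw [lintegral_const_mul _ (hfw.pow_const p), ← ENNReal.inv_pow, ← ENNReal.div_eq_inv_mul]
          exact ENNReal.div_le_of_le_mul (h2 u w)
      · exact (m2.comp ((measurable_fst.prodMk measurable_const).prodMk measurable_snd)).aemeasurable
    refine (lintegral_mono this).trans ?_
    rw [lintegral_mul_const _ hW]
    apply le_of_eq; ring

lemma AA_meas {d : ℕ} {Ω : Type*} [MeasurableSpace Ω] {v : EuclideanSpace ℝ (Fin d)}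
    {F : Ω → EuclideanSpace ℝ (Fin d) → EuclideanSpace ℝ (Fin d)} (hF : Measurable (Function.uncurry F)) (s t : ℝ) :
    Measurable (Function.uncurry fun ω => AA v (F ω) s t) := by
  have h : Measurable fun z : (Ω × EuclideanSpace ℝ (Fin d)) × ℝ => F z.1.1 (z.1.2 + z.2 • v) :=
    hF.comp ((measurable_fst.comp measurable_fst).prodMk ((measurable_snd.comp measurable_fst).add (measurable_snd.smul_const v)))
  have h2 : ∀ μ : Measure ℝ, SFinite μ → Measurable fun z : Ω × EuclideanSpace ℝ (Fin d) => ∫ r, F z.1 (z.2 + r • v) ∂μ := by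
    intro μ hμ
    exact (StronglyMeasurable.integral_prod_right (ν := μ) h.stronglyMeasurable).measurable
  unfold AA intervalIntegral
  exact (h2 _ inferInstance).sub (h2 _ inferInstance)

lemma symb_one {d : ℕ} (x k : EuclideanSpace ℝ (Fin d)) :
    ‖((1:ℝ):ℂ) * Complex.exp (Complex.I * (⟪k, x⟫ : ℝ)) + ((0:ℝ):ℂ) * Complex.exp (Complex.I * (⟪k, x⟫ : ℝ))‖ ≤ 1 := by
  simp [mul_comm Complex.I, Complex.norm_exp_ofReal_mul_I]

lemma ofReal_aux {d p : ℕ} {C : ENNReal} {K L : ℝ} (hK : 0 < K) (hL : 0 ≤ L) (w : EuclideanSpace ℝ (Fin d)) :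
    C * ENNReal.ofReal (K * ‖w‖ * L) ^ p ≤ C * ENNReal.ofReal ((1 + K) * L) ^ p * ‖w‖ₑ ^ p := by
  rw [mul_assoc C, ← mul_pow, ← ofReal_norm, ← ENNReal.ofReal_mul (by positivity)]
  have : K * ‖w‖ * L ≤ (1 + K) * L * ‖w‖ := by nlinarith [norm_nonneg w, mul_nonneg (norm_nonneg w) hL]
  gcongr C * ENNReal.ofReal ?_ ^ p

lemma NsF_exp {d p : ℕ} (hp : 1 ≤ p) {K ex : ℝ} (hK : 0 < K) (hex : 0 ≤ ex) {v : EuclideanSpace ℝ (Fin d)} (hv : ‖v‖ = 1)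
    {Ω : Type*} [MeasurableSpace Ω] {P : Measure Ω} [SFinite P]
    {F : Ω → EuclideanSpace ℝ (Fin d) → EuclideanSpace ℝ (Fin d)} {C : ENNReal}
    (hF_meas : Measurable (Function.uncurry F))
    (H : MomBound d K ex v P F p C) :
    ∫⁻ ω, Ns p (F ω) ∂P ≤ CW d * (C * ENNReal.ofReal ((1 + K) * K ^ (ex / 2)) ^ p) := by
  apply Ns_exp hp P hF_meas
  · intro x
    have := point_moment hK hex hv H 1 0 x x 1 zero_le_one (fun k _ => symb_one x k)
    simp only [one_smul, zero_smul, add_zero] at this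
    refine this.trans ?_
    gcongr; linarith
  · intro x w
    have := point_moment hK hex hv H 1 (-1) (x + w) x (K * ‖w‖) (by positivity) (fun k hk => by
      simpa using symbol_bound k K hk x w)
    simp only [one_smul, neg_smul, ← sub_eq_add_neg] at this
    exact this.trans (ofReal_aux hK (by positivity) w)

lemma NsAA_exp {d p : ℕ} (hp : 1 ≤ p) {K β : ℝ} (hK : 0 < K) (hβ0 : 0 ≤ β) (hβ1 : β ≤ 1) {v : EuclideanSpace ℝ (Fin d)} (hv : ‖v‖ = 1)
    {Ω : Type*} [MeasurableSpace Ω] {P : Measure Ω} [SFinite P]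
    {F : Ω → EuclideanSpace ℝ (Fin d) → EuclideanSpace ℝ (Fin d)} {C : ENNReal}
    (hF_meas : Measurable (Function.uncurry F)) (hF_cont : ∀ᵐ ω ∂P, Continuous (F ω))
    (H : MomBound d K (2 - 2 * β) v P F p C) (s l : ℝ) (hl : 0 < l) :
    ∫⁻ ω, Ns p (AA v (F ω) s (s + l)) ∂P ≤ CW d * (C * ENNReal.ofReal ((1 + K) * (l ^ β * Real.pi ^ (1 - β))) ^ p) := by
  apply Ns_exp hp P (AA_meas hF_meas s (s + l))
  · intro x
    have := AA_moment hβ0 hβ1 hv hF_meas hF_cont H 1 0 x x 1 zero_le_one (fun k _ => symb_one x k) s l hl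
    simp only [one_smul, zero_smul, add_zero] at this
    refine this.trans ?_
    gcongr; linarith
  · intro x w
    have := AA_moment hβ0 hβ1 hv hF_meas hF_cont H 1 (-1) (x + w) x (K * ‖w‖) (by positivity) (fun k hk => by
      simpa using symbol_bound k K hk x w) s l hl
    simp only [one_smul, neg_smul, ← sub_eq_add_neg] at this
    exact this.trans (ofReal_aux hK (by positivity) w)

lemma AA_cont {d : ℕ} {v : EuclideanSpace ℝ (Fin d)}
    {f : EuclideanSpace ℝ (Fin d) → EuclideanSpace ℝ (Fin d)} (hf : Continuous f) (s t : ℝ) :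
    Continuous (AA v f s t) := by
  unfold AA
  apply intervalIntegral.continuous_parametric_intervalIntegral_of_continuous'
  fun_prop

lemma AA_add {d : ℕ} {v : EuclideanSpace ℝ (Fin d)}
    {f : EuclideanSpace ℝ (Fin d) → EuclideanSpace ℝ (Fin d)} (hf : Continuous f) (a b c : ℝ) (x : EuclideanSpace ℝ (Fin d)) :
    AA v f a b x + AA v f b c x = AA v f a c x := by
  unfold AA
  have : Continuous fun r : ℝ => f (x + r • v) := by fun_prop
  exact intervalIntegral.integral_add_adjacent_intervals (this.intervalIntegrable _ _) (this.intervalIntegrable _ _)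

lemma base_est {d : ℕ} {v : EuclideanSpace ℝ (Fin d)}
    {f : EuclideanSpace ℝ (Fin d) → EuclideanSpace ℝ (Fin d)} (hf : Continuous f)
    (y : ℝ → EuclideanSpace ℝ (Fin d)) (δ T R N η : ℝ) (hδ : 0 < δ) (hN : 0 ≤ N) (hη0 : 0 ≤ η)
    (hy : ∀ s, 0 ≤ s → HasDerivAt y (δ • f (y s + s • v)) s)
    (hR : ∀ s r, 0 ≤ s → s ≤ T → 0 ≤ r → r ≤ T → ‖y s + r • v‖ ≤ R)
    (hF : ∀ x, ‖x‖ ≤ R → ‖f x‖ ≤ N)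
    (hF2 : ∀ x x', ‖x‖ ≤ R → ‖x'‖ ≤ R → ‖f x - f x'‖ ≤ N * ‖x - x'‖ ^ η)
    (s h : ℝ) (hs : 0 ≤ s) (hh : 0 ≤ h) (hsh : s + h ≤ T) :
    ‖y (s + h) - y s - δ • AA v f s (s + h) (y s)‖ ≤ (δ * N) * (δ * N * h) ^ η * h := by
  have hyc : ∀ r, 0 ≤ r → ContinuousAt y r := fun r hr => (hy r hr).continuousAt
  have hle : s ≤ s + h := by linarith
  have hc1 : ContinuousOn (fun r => f (y r + r • v)) (uIcc s (s + h)) := by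
    rw [uIcc_of_le hle]
    intro r hr
    apply ContinuousAt.continuousWithinAt
    have := hyc r (hs.trans hr.1)
    fun_prop
  have hc2 : Continuous fun r : ℝ => f (y s + r • v) := by fun_prop
  have e1 : y (s + h) - y s = ∫ r in s..(s+h), δ • f (y r + r • v) := by
    symm
    apply intervalIntegral.integral_eq_sub_of_hasDerivAt
    · intro r hr
      rw [uIcc_of_le hle] at hr
      exact hy r (hs.trans hr.1)
    · exact (hc1.const_smul δ).intervalIntegrable
  have e2 : y (s + h) - y s - δ • AA v f s (s + h) (y s) = ∫ r in s..(s+h), δ • (f (y r + r • v) - f (y s + r • v)) := by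
    simp_rw [smul_sub]
    have ii1 : IntervalIntegrable (fun r => δ • f (y r + r • v)) volume s (s + h) := (hc1.const_smul δ).intervalIntegrable
    have ii2 : IntervalIntegrable (fun r => δ • f (y s + r • v)) volume s (s + h) := (hc2.const_smul δ).intervalIntegrable _ _
    rw [intervalIntegral.integral_sub ii1 ii2, ← e1,
      intervalIntegral.integral_smul]; rfl
  have hlip : ∀ r ∈ Icc s (s + h), ‖y r - y s‖ ≤ δ * N * h := by
    intro r hr
    have := norm_image_sub_le_of_norm_deriv_le_segment' (f := y) (f' := fun r => δ • f (y r + r • v)) (a := s) (b := s + h) (C := δ * N)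
      (fun r hr => (hy r (hs.trans hr.1)).hasDerivWithinAt) (fun r hr => by
        rw [norm_smul, Real.norm_of_nonneg hδ.le]
        gcongr
        exact hF _ (hR r r (hs.trans hr.1) (hr.2.le.trans hsh) (hs.trans hr.1) (hr.2.le.trans hsh))) r hr
    refine this.trans ?_
    have := hr.2
    gcongr; linarith
  rw [e2]
  have := intervalIntegral.norm_integral_le_of_norm_le_const (a := s) (b := s + h) (C := (δ * N) * (δ * N * h) ^ η)
    (f := fun r => δ • (f (y r + r • v) - f (y s + r • v))) (by
      intro r hr
      rw [uIoc_of_le hle] at hr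
      have hr' : r ∈ Icc s (s + h) := ⟨hr.1.le, hr.2⟩
      have r0 : 0 ≤ r := hs.trans hr'.1
      have r1 : r ≤ T := hr'.2.trans hsh
      rw [norm_smul, Real.norm_of_nonneg hδ.le, mul_assoc]
      gcongr
      refine (hF2 _ _ (hR r r r0 r1 r0 r1) (hR s r hs (hle.trans hsh) r0 r1)).trans ?_
      gcongr
      rw [add_sub_add_right_eq_sub]
      exact hlip r hr')
  simpa [abs_of_nonneg hh] using this

lemma dyadic_core {d : ℕ} {v : EuclideanSpace ℝ (Fin d)}
    {f : EuclideanSpace ℝ (Fin d) → EuclideanSpace ℝ (Fin d)} (hf : Continuous f)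
    (y : ℝ → EuclideanSpace ℝ (Fin d)) (δ T R N η γ Cθ : ℝ) (hδ : 0 < δ) (hT : 0 < T) (hN : 0 < N) (hη0 : 0 < η) (hη1 : η ≤ 1)
    (hγ1 : γ < 1) (hθ : 1 < γ * (1 + η)) (hCθ : Cθ = 1 / (1 - 2 ^ (1 - γ * (1 + η))))
    (hy0 : y 0 = 0)
    (hy : ∀ s, 0 ≤ s → HasDerivAt y (δ • f (y s + s • v)) s)
    (hR : ∀ s r, 0 ≤ s → s ≤ T → 0 ≤ r → r ≤ T → ‖y s + r • v‖ ≤ R)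
    (hF : ∀ x, ‖x‖ ≤ R → ‖f x‖ ≤ N)
    (hF2 : ∀ x x', ‖x‖ ≤ R → ‖x'‖ ≤ R → ‖f x - f x'‖ ≤ N * ‖x - x'‖ ^ η)
    (hA : ∀ n j : ℕ, j < 2 ^ n → ∀ x, ‖x‖ ≤ R →
      ‖AA v f (j * (T / 2 ^ n)) (j * (T / 2 ^ n) + T / 2 ^ n) x‖ ≤ N * (T / 2 ^ n) ^ γ)
    (hA2 : ∀ n j : ℕ, j < 2 ^ n → ∀ x x', ‖x‖ ≤ R → ‖x'‖ ≤ R →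
      ‖AA v f (j * (T / 2 ^ n)) (j * (T / 2 ^ n) + T / 2 ^ n) x - AA v f (j * (T / 2 ^ n)) (j * (T / 2 ^ n) + T / 2 ^ n) x'‖
        ≤ N * (T / 2 ^ n) ^ γ * ‖x - x'‖ ^ η)
    (hsmall : Cθ * (δ * N * T ^ γ) ^ η ≤ 1) :
    ‖y T‖ ≤ 2 * (δ * N) * T ^ γ := by
  set θ := γ * (1 + η) with hθdef
  have hγ0 : 0 < γ := by
    by_contra hc
    have : θ ≤ 0 := mul_nonpos_of_nonpos_of_nonneg (not_lt.1 hc) (by linarith)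
    linarith
  set lam := δ * N with hlam
  have hlam0 : 0 < lam := by positivity
  set q : ℝ := 2 ^ (1 - θ) with hq
  have hq0 : 0 < q := by positivity
  have hq1 : q < 1 := Real.rpow_lt_one_of_one_lt_of_neg (by norm_num) (by linarith)
  have hC1 : 1 ≤ Cθ := by rw [hCθ, le_div_iff₀ (by linarith)]; linarith
  have hCq : q * (Cθ + 1) ≤ Cθ := by
    have : Cθ * (1 - q) = 1 := by rw [hCθ]; field_simp [(by linarith : (1 - q) ≠ 0)]
    nlinarith
  have hR' : ∀ s, 0 ≤ s → s ≤ T → ‖y s‖ ≤ R := fun s h1 h2 => by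
    simpa using hR s 0 h1 h2 le_rfl hT.le
  have hh : ∀ n : ℕ, 0 < T / 2 ^ n := fun n => by positivity
  have hhT : ∀ n : ℕ, T / 2 ^ n ≤ T := fun n => div_le_self hT.le (one_le_pow₀ (by norm_num))
  have hjT : ∀ n j : ℕ, j < 2 ^ n → (j:ℝ) * (T / 2 ^ n) + T / 2 ^ n ≤ T := by
    intro n j hj
    have : (j:ℝ) + 1 ≤ 2 ^ n := by exact_mod_cast hj
    have h2 : ((j:ℝ) + 1) * (T / 2 ^ n) ≤ 2 ^ n * (T / 2 ^ n) := by have := hh n; gcongr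
    rw [mul_div_cancel₀ _ (by positivity)] at h2
    linarith
  have hsm : ∀ h, 0 < h → h ≤ T → Cθ * lam ^ (1 + η) * h ^ θ ≤ lam * h ^ γ := by
    intro h h0 h1
    have e : Cθ * lam ^ (1 + η) * h ^ θ = (lam * h ^ γ) * (Cθ * (lam * h ^ γ) ^ η) := by
      rw [hθdef, Real.rpow_add hlam0, Real.rpow_one, mul_add, mul_one, Real.rpow_add h0, Real.mul_rpow hlam0.le (by positivity),
        ← Real.rpow_mul h0.le]; ring
    rw [e]
    apply mul_le_of_le_one_right (by positivity)
    refine le_trans ?_ hsmall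
    gcongr
  let Pn : ℕ → Prop := fun n => ∀ j : ℕ, j < 2 ^ n →
    ‖y (j * (T / 2 ^ n) + T / 2 ^ n) - y (j * (T / 2 ^ n)) - δ • AA v f (j * (T / 2 ^ n)) (j * (T / 2 ^ n) + T / 2 ^ n) (y (j * (T / 2 ^ n)))‖
      ≤ Cθ * lam ^ (1 + η) * (T / 2 ^ n) ^ θ
  have hbase : ∀ n, T / 2 ^ n ≤ 1 → Pn n := by
    intro n hn j hj
    have h0 := hh n
    refine (base_est hf y δ T R N η hδ hN.le hη0.le hy hR hF hF2 (j * (T / 2 ^ n)) (T / 2 ^ n) (by positivity) h0.le (hjT n j hj)).trans ?_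
    rw [← hlam]
    set h := T / 2 ^ n
    have e : lam * (lam * h) ^ η * h = 1 * lam ^ (1 + η) * h ^ (1 + η) := by
      rw [Real.mul_rpow hlam0.le h0.le, Real.rpow_add hlam0, Real.rpow_add h0, Real.rpow_one, Real.rpow_one]; ring
    rw [e]
    have : h ^ (1 + η) ≤ h ^ θ := Real.rpow_le_rpow_of_exponent_ge h0 hn (by rw [hθdef]; nlinarith)
    gcongr
  have hinc : ∀ n, Pn n → ∀ j : ℕ, j < 2 ^ n →
      ‖y (j * (T / 2 ^ n) + T / 2 ^ n) - y (j * (T / 2 ^ n))‖ ≤ 2 * lam * (T / 2 ^ n) ^ γ := by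
    intro n hP j hj
    have h1 := hP j hj
    have h2 := hsm _ (hh n) (hhT n)
    have h0 := hh n
    have h3 := hA n j hj (y (j * (T / 2 ^ n))) (hR' _ (by positivity) (by have := hjT n j hj; linarith))
    set z := y (j * (T / 2 ^ n) + T / 2 ^ n) - y (j * (T / 2 ^ n))
    set A := AA v f (j * (T / 2 ^ n)) (j * (T / 2 ^ n) + T / 2 ^ n) (y (j * (T / 2 ^ n)))
    have h4 : ‖z‖ ≤ ‖z - δ • A‖ + ‖δ • A‖ := by simpa using norm_add_le (z - δ • A) (δ • A)
    have h5 : ‖δ • A‖ ≤ lam * (T / 2 ^ n) ^ γ := by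
      rw [norm_smul, Real.norm_of_nonneg hδ.le, hlam, mul_assoc]; gcongr
    linarith
  have hstep : ∀ n, Pn (n + 1) → Pn n := by
    intro n hP j hj
    have hj1 : 2 * j < 2 ^ (n + 1) := by rw [pow_succ]; omega
    have hj2 : 2 * j + 1 < 2 ^ (n + 1) := by rw [pow_succ]; omega
    have E1 := hP (2 * j) hj1
    have E2 := hP (2 * j + 1) hj2
    have D1 := hinc (n + 1) hP (2 * j) hj1
    have A2 := hA2 (n + 1) (2 * j + 1) hj2
    have T1 := hjT (n + 1) (2 * j + 1) hj2
    have ehn : T / 2 ^ n = T / 2 ^ (n + 1) + T / 2 ^ (n + 1) := by rw [pow_succ]; field_simp; norm_num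
    have h0 := hh (n + 1)
    have es : (j:ℝ) * (T / 2 ^ n) = ((2 * j : ℕ):ℝ) * (T / 2 ^ (n + 1)) := by rw [ehn]; push_cast; ring
    have em : ((2 * j + 1 : ℕ):ℝ) * (T / 2 ^ (n + 1)) = ((2 * j : ℕ):ℝ) * (T / 2 ^ (n + 1)) + T / 2 ^ (n + 1) := by push_cast; ring
    have hn2 : T / 2 ^ (n + 1) = (T / 2 ^ n) / 2 := by linarith
    have hs0 : 0 ≤ ((2 * j : ℕ):ℝ) * (T / 2 ^ (n + 1)) := by positivity
    rw [em] at E2 A2 T1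
    have ee : (j:ℝ) * (T / 2 ^ n) + T / 2 ^ n = ((2 * j : ℕ):ℝ) * (T / 2 ^ (n + 1)) + T / 2 ^ (n + 1) + T / 2 ^ (n + 1) := by
      rw [es]; linarith
    rw [ee, es]
    set h := T / 2 ^ (n + 1) with hhdef
    set s := ((2 * j : ℕ):ℝ) * h with hs
    have hTn : T / 2 ^ n = 2 * h := by linarith
    rw [hTn]
    have A3 := A2 (y (s + h)) (y s) (hR' _ (by linarith) (by linarith)) (hR' _ hs0 (by linarith))
    rw [← AA_add hf s (s + h) (s + h + h) (y s)]
    have hdec : y (s + h + h) - y s - δ • (AA v f s (s + h) (y s) + AA v f (s + h) (s + h + h) (y s)) =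
       (y (s + h) - y s - δ • AA v f s (s + h) (y s)) + (y (s + h + h) - y (s + h) - δ • AA v f (s + h) (s + h + h) (y (s + h)))
        + δ • (AA v f (s + h) (s + h + h) (y (s + h)) - AA v f (s + h) (s + h + h) (y s)) := by
      simp only [smul_add, smul_sub]; abel
    rw [hdec]
    have n1 := norm_add₃_le (a := (y (s + h) - y s - δ • AA v f s (s + h) (y s)))
       (b := (y (s + h + h) - y (s + h) - δ • AA v f (s + h) (s + h + h) (y (s + h))))
       (c := δ • (AA v f (s + h) (s + h + h) (y (s + h)) - AA v f (s + h) (s + h + h) (y s)))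
    have n2 : ‖δ • (AA v f (s + h) (s + h + h) (y (s + h)) - AA v f (s + h) (s + h + h) (y s))‖ ≤ 2 * lam ^ (1 + η) * h ^ θ := by
      rw [norm_smul, Real.norm_of_nonneg hδ.le]
      calc δ * ‖_‖ ≤ δ * (N * h ^ γ * (2 * lam * h ^ γ) ^ η) := by
            gcongr; refine A3.trans ?_; gcongr
        _ = 2 ^ η * (lam ^ (1 + η) * h ^ θ) := by
            rw [Real.mul_rpow (by positivity) (by positivity), Real.mul_rpow (by positivity) (by positivity), hθdef, Real.rpow_add hlam0, Real.rpow_one, mul_add, mul_one, Real.rpow_add h0,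
              ← Real.rpow_mul h0.le, hlam]; ring
        _ ≤ 2 * (lam ^ (1 + η) * h ^ θ) := by
            gcongr
            simpa using Real.rpow_le_rpow_of_exponent_le (x := 2) (by norm_num) hη1
        _ = _ := by ring
    have eθ : (2 * h) ^ θ = 2 / q * h ^ θ := by
      rw [Real.mul_rpow (by norm_num) h0.le, hq, Real.rpow_sub (by norm_num), Real.rpow_one]
      field_simp
    rw [eθ]
    have hpos : 0 < lam ^ (1 + η) * h ^ θ := by positivity
    calc _ ≤ 2 * ((Cθ + 1) * (lam ^ (1 + η) * h ^ θ)) := by linarith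
      _ ≤ 2 * ((Cθ / q) * (lam ^ (1 + η) * h ^ θ)) := by
        gcongr
        rw [le_div_iff₀ hq0]; linarith
      _ = _ := by ring
  have hP0 : Pn 0 := by
    obtain ⟨m, hm⟩ := exists_nat_ge T
    have hm1 : T / 2 ^ m ≤ 1 := by
      rw [div_le_one (by positivity)]
      refine hm.trans ?_
      exact_mod_cast (Nat.lt_two_pow_self (n := m)).le
    have : ∀ k, k ≤ m → Pn (m - k) := by
      intro k
      induction k with
      | zero => intro _; exact hbase m hm1
      | succ k ih =>
        intro hk
        apply hstep
        have := ih (by omega)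
        rwa [show m - (k + 1) + 1 = m - k by omega]
    simpa using this m le_rfl
  have := hinc 0 hP0 0 (by norm_num)
  simpa [hy0] using this

lemma growth {d : ℕ} {v : EuclideanSpace ℝ (Fin d)} (hv : ‖v‖ = 1)
    {f : EuclideanSpace ℝ (Fin d) → EuclideanSpace ℝ (Fin d)}
    (X : ℝ → EuclideanSpace ℝ (Fin d)) (δ T m B : ℝ) (hδ : 0 < δ) (hδ1 : δ ≤ 1) (hT : 0 < T) (hTB : T ≤ B) (hB : 1 ≤ B) (hm : 1 ≤ m)
    (hX0 : X 0 = 0) (hX : ∀ s, 0 ≤ s → HasDerivAt X (v + δ • f (X s)) s)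
    (hF : ∀ R x, ‖x‖ ≤ R → ‖f x‖ ≤ m * (2 + R) ^ (1/2:ℝ)) :
    ∀ s r, 0 ≤ s → s ≤ T → 0 ≤ r → r ≤ T → ‖X s - s • v + r • v‖ ≤ 9 * B ^ 2 * m ^ 2 := by
  have hc : ContinuousOn (fun s => ‖X s‖) (Icc 0 T) := fun s hs =>
    ((hX s hs.1).continuousAt.norm).continuousWithinAt
  obtain ⟨s0, hs0, hmax⟩ := isCompact_Icc.exists_isMaxOn (nonempty_Icc.2 hT.le) hc
  set M := ‖X s0‖ with hM
  have hle : ∀ s ∈ Icc 0 T, ‖X s‖ ≤ M := fun s hs => hmax hs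
  have hM0 : 0 ≤ M := norm_nonneg _
  set z := (2 + M) ^ (1/2:ℝ) with hz
  have hz0 : 0 ≤ z := by positivity
  have hz2 : z ^ 2 = 2 + M := by
    rw [hz, ← Real.rpow_mul_natCast (by positivity)]; norm_num
  have h1 := norm_image_sub_le_of_norm_deriv_le_segment' (f := X) (f' := fun r => v + δ • f (X r)) (a := 0) (b := T) (C := 1 + m * z)
      (fun r hr => (hX r hr.1).hasDerivWithinAt) (fun r hr => by
        refine (norm_add_le _ _).trans ?_
        rw [hv, norm_smul, Real.norm_of_nonneg hδ.le]
        gcongr 1 + ?_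
        have h2 := hF M (X r) (hle r ⟨hr.1, hr.2.le⟩)
        calc δ * ‖f (X r)‖ ≤ 1 * (m * z) := by gcongr
          _ = _ := one_mul _) s0 hs0
  rw [hX0, sub_zero, sub_zero] at h1
  have h2 : M ≤ B + B * m * z := by
    calc M ≤ (1 + m * z) * s0 := h1
      _ ≤ (1 + m * z) * B := by have := hs0.2.trans hTB; gcongr
      _ = _ := by ring
  have h3 : z ^ 2 ≤ 4 + 2 * B + (B * m) ^ 2 := by nlinarith [sq_nonneg (z - B * m)]
  have hBm : B ≤ B ^ 2 * m ^ 2 := by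
    have : 1 ≤ B * m := by nlinarith
    have h5 : B ≤ B * m := by nlinarith
    nlinarith
  have h1B : 1 ≤ B ^ 2 * m ^ 2 := hB.trans hBm
  intro s r hs hsT hr hrT
  have h6 : ‖X s - s • v + r • v‖ ≤ ‖X s‖ + ‖s • v‖ + ‖r • v‖ :=
    (norm_add_le _ _).trans (add_le_add_left (norm_sub_le _ _) _)
  rw [norm_smul, norm_smul, hv, Real.norm_of_nonneg hs, Real.norm_of_nonneg hr] at h6
  have h7 := hle s ⟨hs, hsT⟩
  nlinarith

lemma path_bound {d p : ℕ} (hp2 : 2 * (d + 1) ≤ p) (C : ℝ) (hC : 1 ≤ C)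
    (hgrr : ∀ f : EuclideanSpace ℝ (Fin d) → EuclideanSpace ℝ (Fin d),
    Continuous f → ∀ S : ℝ, 0 ≤ S → Ns p f ≤ ENNReal.ofReal S → ∀ R : ℝ, 
    (∀ x, ‖x‖ ≤ R → ‖f x‖ ≤ C * (2 + R) ^ (((d:ℝ) + 1) / p) * S ^ (1 / (p:ℝ))) ∧
    (∀ x x', ‖x‖ ≤ R → ‖x'‖ ≤ R → ‖f x - f x'‖ ≤ C * (2 + R) ^ (((d:ℝ) + 1) / p) * S ^ (1 / (p:ℝ)) * ‖x - x'‖ ^ (1 - 2 * (d:ℝ) / p)))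
    {v : EuclideanSpace ℝ (Fin d)} (hv : ‖v‖ = 1)
    {f : EuclideanSpace ℝ (Fin d) → EuclideanSpace ℝ (Fin d)} (hf : Continuous f)
    (X : ℝ → EuclideanSpace ℝ (Fin d)) (δ T B γ S : ℝ) (hδ : 0 < δ) (hδ1 : δ ≤ 1) (hT : 0 < T) (hTB : T ≤ B) (hB : 1 ≤ B) 
    (hγ1 : γ < 1) (hθ : 1 < γ * (1 + (1 - 2 * (d:ℝ) / p)))
    (hX0 : X 0 = 0) (hX : ∀ s, 0 ≤ s → HasDerivAt X (v + δ • f (X s)) s)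
    (hS : 1 ≤ S) (hN1 : Ns p f ≤ ENNReal.ofReal S)
    (hN2 : ∀ n j : ℕ, j < 2 ^ n → Ns p (AA v f (j * (T / 2 ^ n)) (j * (T / 2 ^ n) + T / 2 ^ n)) ≤ ENNReal.ofReal (S * ((T / 2 ^ n) ^ γ) ^ p)) :
    ‖X T - T • v‖ ≤ 9 * B ^ 2 * (C * S ^ (1 / (p:ℝ))) ^ 2 ∧
    (1 / (1 - 2 ^ (1 - γ * (1 + (1 - 2 * (d:ℝ) / p)))) *
      (δ * (C * S ^ (1 / (p:ℝ)) * (11 * B ^ 2 * (C * S ^ (1 / (p:ℝ))) ^ 2) ^ (((d:ℝ) + 1) / p)) * B ^ γ) ^ (1 - 2 * (d:ℝ) / p) ≤ 1 → 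
      ‖X T - T • v‖ ≤ 2 * (δ * (C * S ^ (1 / (p:ℝ)) * (11 * B ^ 2 * (C * S ^ (1 / (p:ℝ))) ^ 2) ^ (((d:ℝ) + 1) / p))) * B ^ γ) := by
  have hp0 : (0:ℝ) < p := by exact_mod_cast (by omega : 0 < p)
  have hexp : ((d:ℝ) + 1) / p ≤ 1 / 2 := by
    rw [div_le_div_iff₀ hp0 (by norm_num)]
    have : ((2 * (d + 1) : ℕ) : ℝ) ≤ p := by exact_mod_cast hp2
    push_cast at this; linarith
  have hS1 : 1 ≤ S ^ (1 / (p:ℝ)) := Real.one_le_rpow hS (by positivity)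
  set m := C * S ^ (1 / (p:ℝ)) with hm
  have hm1 : 1 ≤ m := by nlinarith
  set η := 1 - 2 * (d:ℝ) / p with hη
  have hη0 : 0 < η := by
    rw [hη, sub_pos, div_lt_one hp0]; exact_mod_cast (by omega : 2 * d < p)
  have hη1 : η ≤ 1 := by
    have : 0 ≤ 2 * (d:ℝ) / p := by positivity
    linarith
  have hg := growth hv (f := f) X δ T m B hδ hδ1 hT hTB hB hm1 hX0 hX (by
    intro R x hx
    have hR : 0 ≤ R := (norm_nonneg _).trans hx
    refine ((hgrr f hf S (by linarith) hN1 R).1 x hx).trans ?_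
    calc _ = m * (2 + R) ^ (((d:ℝ) + 1) / p) := by rw [hm]; ring
      _ ≤ _ := by
        gcongr; linarith)
  refine ⟨by simpa using hg T 0 hT.le le_rfl le_rfl hT.le, fun hsmall => ?_⟩
  have hBm : 1 ≤ B ^ 2 * m ^ 2 := by
    have h1 : 1 ≤ B ^ 2 := one_le_pow₀ hB
    have h2 : 1 ≤ m ^ 2 := one_le_pow₀ hm1
    nlinarith
  set R := 9 * B ^ 2 * m ^ 2 with hR
  have hR0 : 0 ≤ R := by positivity
  set N := m * (11 * B ^ 2 * m ^ 2) ^ (((d:ℝ) + 1) / p) with hN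
  have hNpos : 0 < N := by positivity
  have hCN : C * (2 + R) ^ (((d:ℝ) + 1) / p) * S ^ (1 / (p:ℝ)) ≤ N := by
    calc _ = m * (2 + R) ^ (((d:ℝ) + 1) / p) := by rw [hm]; ring
      _ ≤ N := by
        rw [hN]; gcongr; rw [hR]; linarith
  have hroot : ∀ h : ℝ, 0 < h → (S * (h ^ γ) ^ p) ^ (1 / (p:ℝ)) = S ^ (1 / (p:ℝ)) * h ^ γ := by
    intro h hh
    rw [Real.mul_rpow (by linarith) (by positivity), one_div, Real.pow_rpow_inv_natCast (by positivity) (by omega)]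
  have hCN2 : ∀ h : ℝ, 0 < h → C * (2 + R) ^ (((d:ℝ) + 1) / p) * (S * (h ^ γ) ^ p) ^ (1 / (p:ℝ)) ≤ N * h ^ γ := by
    intro h hh
    rw [hroot h hh, ← mul_assoc]; gcongr
  have hh : ∀ n : ℕ, 0 < T / 2 ^ n := fun n => by positivity
  have hγ0 : 0 < γ := by
    by_contra hc
    have : γ * (1 + η) ≤ 0 := mul_nonpos_of_nonpos_of_nonneg (not_lt.1 hc) (by linarith)
    linarith
  have hS0 : 0 ≤ S := by linarith
  have hfin := dyadic_core (v := v) hf (fun s => X s - s • v) δ T R N η γ _ hδ hT hNpos hη0 hη1 hγ1 hθ rfl (by simp [hX0])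
    (by
      intro s hs
      have h1 := (hX s hs).sub ((hasDerivAt_id s).smul_const v)
      simp only [one_smul, add_sub_cancel_left, sub_add_cancel] at h1 ⊢
      exact h1)
    hg
    (fun x hx => ((hgrr f hf S hS0 hN1 R).1 x hx).trans hCN)
    (fun x x' hx hx' => ((hgrr f hf S hS0 hN1 R).2 x x' hx hx').trans (by gcongr))
    (fun n j hj x hx => ((hgrr _ (AA_cont hf _ _) _ (by have := hh n; positivity) (hN2 n j hj) R).1 x hx).trans (hCN2 _ (hh n)))
    (fun n j hj x x' hx hx' => ((hgrr _ (AA_cont hf _ _) _ (by have := hh n; positivity) (hN2 n j hj) R).2 x x' hx hx').trans (by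
      have := hCN2 _ (hh n)
      gcongr))
    (by
      refine le_trans ?_ hsmall
      have hq1 : (2:ℝ) ^ (1 - γ * (1 + η)) < 1 := Real.rpow_lt_one_of_one_lt_of_neg (by norm_num) (by linarith)
      have : 0 < 1 - (2:ℝ) ^ (1 - γ * (1 + η)) := by linarith
      gcongr)
  refine hfin.trans ?_
  gcongr

noncomputable def Sg {d : ℕ} (p : ℕ) (v : EuclideanSpace ℝ (Fin d)) {Ω : Type*}
    (F : Ω → EuclideanSpace ℝ (Fin d) → EuclideanSpace ℝ (Fin d)) (γ T : ℝ) (ω : Ω) : ENNReal :=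
  1 + Ns p (F ω) + ∑' n : ℕ, ∑ j ∈ Finset.range (2 ^ n),
    (ENNReal.ofReal (((T / 2 ^ n) ^ γ) ^ p))⁻¹ * Ns p (AA v (F ω) (j * (T / 2 ^ n)) (j * (T / 2 ^ n) + T / 2 ^ n))

lemma Sg_meas {d p : ℕ} {v : EuclideanSpace ℝ (Fin d)} {Ω : Type*} [MeasurableSpace Ω]
    {F : Ω → EuclideanSpace ℝ (Fin d) → EuclideanSpace ℝ (Fin d)} (hF : Measurable (Function.uncurry F)) (γ T : ℝ) :
    Measurable (Sg p v F γ T) := by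
  unfold Sg
  refine ((Ns_meas hF).const_add 1).add ?_
  refine Measurable.tsum fun n => ?_
  refine Finset.measurable_sum _ fun j _ => ?_
  exact (Ns_meas (AA_meas hF _ _)).const_mul _

lemma Sg_path {d p : ℕ} {v : EuclideanSpace ℝ (Fin d)} {Ω : Type*}
    {F : Ω → EuclideanSpace ℝ (Fin d) → EuclideanSpace ℝ (Fin d)} (γ T : ℝ) (hT : 0 < T) (ω : Ω) (hfin : Sg p v F γ T ω ≠ ⊤) :
    1 ≤ (Sg p v F γ T ω).toReal ∧ Ns p (F ω) ≤ ENNReal.ofReal (Sg p v F γ T ω).toReal ∧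
    ∀ n j : ℕ, j < 2 ^ n → Ns p (AA v (F ω) (j * (T / 2 ^ n)) (j * (T / 2 ^ n) + T / 2 ^ n)) ≤
      ENNReal.ofReal ((Sg p v F γ T ω).toReal * ((T / 2 ^ n) ^ γ) ^ p) := by
  refine ⟨?_, ?_, ?_⟩
  · rw [← ENNReal.toReal_one]
    apply ENNReal.toReal_mono hfin
    unfold Sg
    rw [add_assoc]; exact le_self_add
  · rw [ENNReal.ofReal_toReal hfin]
    unfold Sg
    rw [add_comm 1, add_assoc]; exact le_self_add
  · intro n j hj
    have h0 : 0 < ((T / 2 ^ n) ^ γ) ^ p := by positivity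
    rw [ENNReal.ofReal_mul ENNReal.toReal_nonneg, ENNReal.ofReal_toReal hfin]
    have h1 : (ENNReal.ofReal (((T / 2 ^ n) ^ γ) ^ p))⁻¹ * Ns p (AA v (F ω) (j * (T / 2 ^ n)) (j * (T / 2 ^ n) + T / 2 ^ n)) ≤ Sg p v F γ T ω := by
      unfold Sg
      refine le_trans ?_ le_add_self
      refine le_trans ?_ (ENNReal.le_tsum n)
      exact Finset.single_le_sum (f := fun j : ℕ => (ENNReal.ofReal (((T / 2 ^ n) ^ γ) ^ p))⁻¹ * Ns p (AA v (F ω) (j * (T / 2 ^ n)) (j * (T / 2 ^ n) + T / 2 ^ n)))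
        (fun _ _ => zero_le) (Finset.mem_range.2 hj)
    rw [mul_comm, ← div_eq_mul_inv] at h1
    exact (ENNReal.div_le_iff (ENNReal.ofReal_pos.2 h0).ne' ENNReal.ofReal_ne_top).1 h1

lemma Sg_exp {d p : ℕ} (hp : 1 ≤ p) {K β γ : ℝ} (hK : 0 < K) (hβ0 : 0 ≤ β) (hβ1 : β ≤ 1) (hκ : 2 ≤ (β - γ) * p)
    {v : EuclideanSpace ℝ (Fin d)} (hv : ‖v‖ = 1)
    {Ω : Type*} [MeasurableSpace Ω] {P : Measure Ω} [IsProbabilityMeasure P]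
    {F : Ω → EuclideanSpace ℝ (Fin d) → EuclideanSpace ℝ (Fin d)} {C : ENNReal} (hC : C ≠ ⊤)
    (hF_meas : Measurable (Function.uncurry F)) (hF_cont : ∀ᵐ ω ∂P, Continuous (F ω))
    (H : MomBound d K (2 - 2 * β) v P F p C) : ∃ A : ℝ, 0 ≤ A ∧ ∀ T B : ℝ, 0 < T → T ≤ B → 1 ≤ B →
    ∫⁻ ω, Sg p v F γ T ω ∂P ≤ ENNReal.ofReal (A * B ^ ((β - γ) * p)) := by
  set A0 : ENNReal := 1 + CW d * (C * ENNReal.ofReal ((1 + K) * K ^ ((2 - 2 * β) / 2)) ^ p) with hA0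
  set A1 : ENNReal := CW d * (C * ENNReal.ofReal ((1 + K) * Real.pi ^ (1 - β)) ^ p) with hA1
  have hA0f : A0 ≠ ⊤ := ENNReal.add_ne_top.2 ⟨by simp, ENNReal.mul_ne_top (CW_fin d) (ENNReal.mul_ne_top hC (by finiteness))⟩
  have hA1f : A1 ≠ ⊤ := ENNReal.mul_ne_top (CW_fin d) (ENNReal.mul_ne_top hC (by finiteness))
  refine ⟨(A0 + A1 * 2).toReal, ENNReal.toReal_nonneg, ?_⟩
  intro T B hT hTB hB
  rw [ENNReal.ofReal_mul ENNReal.toReal_nonneg, ENNReal.ofReal_toReal (by finiteness)]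
  set κ := (β - γ) * p with hκd
  set b := ENNReal.ofReal (B ^ κ) with hb
  have hb1 : 1 ≤ b := by
    rw [hb, ← ENNReal.ofReal_one]; exact ENNReal.ofReal_le_ofReal (Real.one_le_rpow hB (by linarith))
  have hterm : ∀ n j : ℕ, ∫⁻ ω, (ENNReal.ofReal (((T / 2 ^ n) ^ γ) ^ p))⁻¹ * Ns p (AA v (F ω) (j * (T / 2 ^ n)) (j * (T / 2 ^ n) + T / 2 ^ n)) ∂P
      ≤ A1 * b * ENNReal.ofReal ((1/4) ^ n) := by
    intro n j
    rw [lintegral_const_mul _ (Ns_meas (AA_meas hF_meas _ _))]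
    have h0 : 0 < T / 2 ^ n := by positivity
    have h1 := NsAA_exp hp hK hβ0 hβ1 hv hF_meas hF_cont H (j * (T / 2 ^ n)) (T / 2 ^ n) h0
    have h2 : (((T / 2 ^ n) ^ γ) ^ p)⁻¹ * ((1 + K) * ((T / 2 ^ n) ^ β * Real.pi ^ (1 - β))) ^ p ≤ ((1 + K) * Real.pi ^ (1 - β)) ^ p * (B ^ κ * (1/4) ^ n) := by
      have e : (((T / 2 ^ n) ^ γ) ^ p)⁻¹ * ((1 + K) * ((T / 2 ^ n) ^ β * Real.pi ^ (1 - β))) ^ p = ((1 + K) * Real.pi ^ (1 - β)) ^ p * (T / 2 ^ n) ^ κ := by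
        rw [hκd, Real.rpow_mul_natCast h0.le, Real.rpow_sub h0, div_pow]
        simp only [mul_pow]; field_simp
      rw [e, Real.div_rpow hT.le (by positivity)]
      have h4 : (4:ℝ) ^ n ≤ (2 ^ n) ^ κ := by
        rw [← Real.rpow_natCast 2 n, ← Real.rpow_mul (by norm_num), mul_comm, Real.rpow_mul (by norm_num), Real.rpow_natCast]
        gcongr
        calc (4:ℝ) = 2 ^ (2:ℝ) := by norm_num
          _ ≤ _ := Real.rpow_le_rpow_of_exponent_le (by norm_num) hκ
      rw [div_eq_mul_inv, one_div, inv_pow]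
      gcongr
    calc _ ≤ (ENNReal.ofReal (((T / 2 ^ n) ^ γ) ^ p))⁻¹ * (CW d * (C * ENNReal.ofReal ((1 + K) * ((T / 2 ^ n) ^ β * Real.pi ^ (1 - β))) ^ p)) := by gcongr
      _ = CW d * (C * ENNReal.ofReal ((((T / 2 ^ n) ^ γ) ^ p)⁻¹ * ((1 + K) * ((T / 2 ^ n) ^ β * Real.pi ^ (1 - β))) ^ p)) := by
        rw [ENNReal.ofReal_mul (p := (((T / 2 ^ n) ^ γ) ^ p)⁻¹) (by positivity), ENNReal.ofReal_inv_of_pos (by positivity), ENNReal.ofReal_pow (p := ((1 + K) * ((T / 2 ^ n) ^ β * Real.pi ^ (1 - β)))) (by positivity)]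
        ring
      _ ≤ CW d * (C * ENNReal.ofReal (((1 + K) * Real.pi ^ (1 - β)) ^ p * (B ^ κ * (1/4) ^ n))) := by gcongr
      _ = _ := by
        rw [ENNReal.ofReal_mul (by positivity), ENNReal.ofReal_mul (p := B ^ κ) (by positivity), ENNReal.ofReal_pow (by positivity), hA1, ← hb]; ring
  have hm : ∀ n j : ℕ, Measurable fun ω => (ENNReal.ofReal (((T / 2 ^ n) ^ γ) ^ p))⁻¹ * Ns p (AA v (F ω) (j * (T / 2 ^ n)) (j * (T / 2 ^ n) + T / 2 ^ n)) :=
    fun n j => (Ns_meas (AA_meas hF_meas _ _)).const_mul _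
  unfold Sg
  rw [lintegral_add_left ((Ns_meas hF_meas).const_add 1), lintegral_add_left measurable_const, lintegral_tsum
    (fun n => (Finset.measurable_sum _ fun j _ => hm n j).aemeasurable)]
  have hsum : ∑' n : ℕ, ∫⁻ ω, ∑ j ∈ Finset.range (2 ^ n), (ENNReal.ofReal (((T / 2 ^ n) ^ γ) ^ p))⁻¹ * Ns p (AA v (F ω) (j * (T / 2 ^ n)) (j * (T / 2 ^ n) + T / 2 ^ n)) ∂P
      ≤ A1 * 2 * b := by
    calc _ ≤ ∑' n : ℕ, A1 * b * ENNReal.ofReal ((1/2) ^ n) := by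
          refine ENNReal.tsum_le_tsum fun n => ?_
          rw [lintegral_finsetSum _ fun j _ => hm n j]
          refine (Finset.sum_le_sum fun j _ => hterm n j).trans ?_
          rw [Finset.sum_const, Finset.card_range, nsmul_eq_mul, mul_left_comm]
          gcongr
          have : ((2 ^ n : ℕ) : ENNReal) = ENNReal.ofReal (2 ^ n) := by
            rw [← ENNReal.ofReal_natCast]; push_cast; rfl
          rw [this, ← ENNReal.ofReal_mul (by positivity), ← mul_pow]
          norm_num
      _ = A1 * b * 2 := by
        rw [ENNReal.tsum_mul_left, ← ENNReal.ofReal_tsum_of_nonneg (fun n => by positivity) summable_geometric_two, tsum_geometric_two]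
        simp
      _ = _ := by ring
  have hFe := NsF_exp hp hK (by linarith : 0 ≤ 2 - 2 * β) hv hF_meas H
  rw [add_mul]
  gcongr
  calc _ ≤ A0 := by
        rw [hA0]; simp only [lintegral_const, measure_univ, mul_one]; gcongr
    _ ≤ A0 * b := le_mul_of_one_le_right' hb1

lemma key_est {d p : ℕ} (hp2 : 2 * (d + 1) ≤ p) (hp4 : 4 ≤ p) (C : ℝ) (hC : 1 ≤ C)
    (hgrr : ∀ f : EuclideanSpace ℝ (Fin d) → EuclideanSpace ℝ (Fin d),
    Continuous f → ∀ S : ℝ, 0 ≤ S → Ns p f ≤ ENNReal.ofReal S → ∀ R : ℝ, 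
    (∀ x, ‖x‖ ≤ R → ‖f x‖ ≤ C * (2 + R) ^ (((d:ℝ) + 1) / p) * S ^ (1 / (p:ℝ))) ∧
    (∀ x x', ‖x‖ ≤ R → ‖x'‖ ≤ R → ‖f x - f x'‖ ≤ C * (2 + R) ^ (((d:ℝ) + 1) / p) * S ^ (1 / (p:ℝ)) * ‖x - x'‖ ^ (1 - 2 * (d:ℝ) / p)))
    {v : EuclideanSpace ℝ (Fin d)} (hv : ‖v‖ = 1)
    {Ω : Type*} [MeasurableSpace Ω] {P : Measure Ω} [IsProbabilityMeasure P]
    {F : Ω → EuclideanSpace ℝ (Fin d) → EuclideanSpace ℝ (Fin d)}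
    (hF_meas : Measurable (Function.uncurry F)) (hF_cont : ∀ᵐ ω ∂P, Continuous (F ω))
    (X : Ω → ℝ → EuclideanSpace ℝ (Fin d)) (δ T B γ ε A κ : ℝ) (hδ : 0 < δ) (hδ1 : δ ≤ 1) (hT : 0 < T) (hTB : T ≤ B) (hB : 1 ≤ B)
    (hε : 0 ≤ ε) (hA : 0 ≤ A)
    (hγ1 : γ < 1) (hθ : 1 < γ * (1 + (1 - 2 * (d:ℝ) / p)))
    (hX : ∀ᵐ ω ∂P, X ω 0 = 0 ∧ ∀ s : ℝ, 0 ≤ s → HasDerivAt (X ω) (v + δ • F ω (X ω s)) s)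
    (hIntg : Integrable (fun ω => ‖X ω T - T • v‖ ^ 2) P)
    (hSg : ∫⁻ ω, Sg p v F γ T ω ∂P ≤ ENNReal.ofReal (A * B ^ κ))
    (hsmall : 1 / (1 - 2 ^ (1 - γ * (1 + (1 - 2 * (d:ℝ) / p)))) *
      (δ * (C * B ^ ε * (11 * B ^ 2 * (C * B ^ ε) ^ 2) ^ (((d:ℝ) + 1) / p)) * B ^ γ) ^ (1 - 2 * (d:ℝ) / p) ≤ 1) :
    ∫ ω, ‖X ω T - T • v‖ ^ 2 ∂P ≤
      (2 * (δ * (C * B ^ ε * (11 * B ^ 2 * (C * B ^ ε) ^ 2) ^ (((d:ℝ) + 1) / p))) * B ^ γ) ^ 2 +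
      81 * C ^ 4 * A * B ^ (4 + κ - ε * (p - 4)) := by
  have hp0 : (0:ℝ) < p := by exact_mod_cast (by omega : 0 < p)
  have hB0 : 0 < B := by linarith
  set η := 1 - 2 * (d:ℝ) / p with hη
  have hη0 : 0 < η := by
    rw [hη, sub_pos, div_lt_one hp0]; exact_mod_cast (by omega : 2 * d < p)
  have hq1 : (2:ℝ) ^ (1 - γ * (1 + η)) < 1 := Real.rpow_lt_one_of_one_lt_of_neg (by norm_num) (by linarith)
  have hq2 : 0 < 1 - (2:ℝ) ^ (1 - γ * (1 + η)) := by linarith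
  have hlt : ∫⁻ ω, Sg p v F γ T ω ∂P ≠ ⊤ := ne_top_of_le_ne_top ENNReal.ofReal_ne_top hSg
  have hmeas := Sg_meas (p := p) (v := v) hF_meas γ T
  have hiS : Integrable (fun ω => (Sg p v F γ T ω).toReal) P := integrable_toReal_of_lintegral_ne_top hmeas.aemeasurable hlt
  have hES : ∫ ω, (Sg p v F γ T ω).toReal ∂P ≤ A * B ^ κ := by
    rw [integral_toReal hmeas.aemeasurable (ae_lt_top hmeas hlt)]
    exact ENNReal.toReal_le_of_le_ofReal (by positivity) hSg
  set sm := 2 * (δ * (C * B ^ ε * (11 * B ^ 2 * (C * B ^ ε) ^ 2) ^ (((d:ℝ) + 1) / p))) * B ^ γ with hsm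
  set D := 81 * C ^ 4 * B ^ (4 - ε * (p - 4)) with hD
  have hD0 : 0 ≤ D := by positivity
  have hpt : ∀ᵐ ω ∂P, ‖X ω T - T • v‖ ^ 2 ≤ sm ^ 2 + D * (Sg p v F γ T ω).toReal := by
    filter_upwards [hF_cont, hX, ae_lt_top hmeas hlt] with ω hc hx hfin
    obtain ⟨hS1, hN1, hN2⟩ := Sg_path γ T hT ω hfin.ne
    set S := (Sg p v F γ T ω).toReal with hSdef
    have hS0 : 0 < S := by linarith
    obtain ⟨b1, b2⟩ := path_bound hp2 C hC hgrr hv hc (X ω) δ T B γ S hδ hδ1 hT hTB hB hγ1 hθ hx.1 hx.2 hS1 hN1 hN2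
    set σ := S ^ (1 / (p:ℝ)) with hσ
    have hσ1 : 1 ≤ σ := Real.one_le_rpow hS1 (by positivity)
    have hσ0 : 0 < σ := by linarith
    rcases le_or_gt σ (B ^ ε) with hcase | hcase
    · have h1 := b2 (by
        refine le_trans ?_ hsmall
        gcongr)
      have h2 : ‖X ω T - T • v‖ ≤ sm := by
        refine h1.trans ?_
        rw [hsm]
        gcongr
      have : 0 ≤ D * S := by positivity
      calc _ ≤ sm ^ 2 := by gcongr
        _ ≤ _ := by linarith
    · have hσp : σ ^ p = S := by
        rw [hσ, one_div, Real.rpow_inv_natCast_pow hS0.le (by omega)]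
      have h3 : σ ^ 4 ≤ S * B ^ (-(ε * (p - 4))) := by
        have e1 : S = σ ^ 4 * σ ^ (p - 4) := by rw [← pow_add, ← hσp]; congr 1; omega
        have e2 : B ^ (ε * (p - 4)) ≤ σ ^ (p - 4) := by
          have : ((p:ℝ) - 4) = ((p - 4 : ℕ) : ℝ) := by rw [Nat.cast_sub hp4]; norm_num
          rw [this, Real.rpow_mul_natCast hB0.le]
          gcongr
        rw [e1, Real.rpow_neg hB0.le, mul_assoc, ← div_eq_mul_inv]
        apply le_mul_of_one_le_right (by positivity)
        rw [one_le_div (by positivity)]; exact e2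
      calc ‖X ω T - T • v‖ ^ 2 ≤ (9 * B ^ 2 * (C * σ) ^ 2) ^ 2 := by gcongr
        _ = 81 * C ^ 4 * B ^ 4 * σ ^ 4 := by ring
        _ ≤ 81 * C ^ 4 * B ^ 4 * (S * B ^ (-(ε * (p - 4)))) := by gcongr
        _ = D * S := by
          rw [hD, sub_eq_add_neg 4, Real.rpow_add hB0]
          have : B ^ (4:ℝ) = B ^ 4 := by rw [← Real.rpow_natCast]; norm_num
          rw [this]; ring
        _ ≤ _ := by have := sq_nonneg sm; linarith
  calc _ ≤ ∫ ω, (sm ^ 2 + D * (Sg p v F γ T ω).toReal) ∂P :=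
        integral_mono_ae hIntg ((integrable_const _).add (hiS.const_mul D)) hpt
    _ = sm ^ 2 + D * ∫ ω, (Sg p v F γ T ω).toReal ∂P := by
        rw [integral_add (integrable_const _) (hiS.const_mul D), integral_const_mul]; simp
    _ ≤ sm ^ 2 + D * (A * B ^ κ) := by gcongr
    _ = _ := by
        rw [hD, show 4 + κ - ε * ((p:ℝ) - 4) = (4 - ε * (p - 4)) + κ by ring, Real.rpow_add hB0 _ κ]; ring

lemma params (d : ℕ) (hd : 2 ≤ d) (α ρ : ℝ) (hα1 : 1 / 2 < α) (hα2 : α < 1) (hρ : 0 < ρ) :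
    ∃ (σ κ : ℝ) (p : ℕ), 0 < σ ∧ (1 - ρ) / α < σ ∧ 0 < κ ∧ α + κ < 1 ∧ 1 / 2 < α - κ ∧ 2 * (d + 1) ≤ p ∧ 4 ≤ p ∧
      1 < (α - κ) * (1 + (1 - 2 * (d:ℝ) / p)) ∧ 13 ≤ 2 * κ * p ∧
      σ * ((α - κ) + 4 * κ + (2 + 8 * κ) * (((d:ℝ) + 1) / p)) < 1 := by
  have hα0 : 0 < α := by linarith
  obtain ⟨σ, h1, h2⟩ := exists_between (show max 0 ((1 - ρ) / α) < 1 / α by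
    apply max_lt (by positivity)
    gcongr; linarith)
  have hσ0 : 0 < σ := (le_max_left _ _).trans_lt h1
  have hσ1 : (1 - ρ) / α < σ := (le_max_right _ _).trans_lt h1
  have hσα : σ * α < 1 := by rwa [lt_div_iff₀ hα0] at h2
  set g := 1 / σ - α with hg
  have hg0 : 0 < g := by rw [hg, sub_pos, lt_div_iff₀ hσ0]; linarith
  set κ := min (g / 12) (min ((1 - α) / 2) ((α - 1 / 2) / 2)) with hκ
  have hκ0 : 0 < κ := lt_min (by positivity) (lt_min (by linarith) (by linarith))
  have k1 : κ ≤ g / 12 := min_le_left _ _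
  have k2 : κ ≤ (1 - α) / 2 := (min_le_right _ _).trans (min_le_left _ _)
  have k3 : κ ≤ (α - 1 / 2) / 2 := (min_le_right _ _).trans (min_le_right _ _)
  set γ := α - κ with hγ
  have hγ2 : 1 / 2 < γ := by linarith
  obtain ⟨p, hp⟩ := exists_nat_ge (2 * (d + 1) + 24 * (d + 1) / g + 4 * d / (2 * γ - 1) + 13 / (2 * κ) + 4 : ℝ)
  have z1 : 0 ≤ 24 * ((d:ℝ) + 1) / g := by positivity
  have z2 : 0 ≤ 4 * (d:ℝ) / (2 * γ - 1) := by apply div_nonneg (by positivity); linarith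
  have z3 : 0 ≤ 13 / (2 * κ) := by positivity
  have z4 : (0:ℝ) ≤ d := by positivity
  have hp0 : (0:ℝ) < p := by linarith
  refine ⟨σ, κ, p, hσ0, hσ1, hκ0, by linarith, hγ2, ?_, ?_, ?_, ?_, ?_⟩
  · have : ((2 * (d + 1) : ℕ):ℝ) ≤ p := by push_cast; linarith
    exact_mod_cast this
  · have : ((4:ℕ):ℝ) ≤ p := by push_cast; linarith
    exact_mod_cast this
  · have h5 : 4 * (d:ℝ) / (2 * γ - 1) < p := by linarith
    rw [div_lt_iff₀ (by linarith)] at h5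
    have h6 : 2 * (d:ℝ) / p < (2 * γ - 1) / 1 := by
      rw [div_lt_div_iff₀ hp0 one_pos]; nlinarith
    have h7 : 0 ≤ 2 * (d:ℝ) / p := by positivity
    nlinarith
  · have h5 : 13 / (2 * κ) ≤ p := by linarith
    rw [div_le_iff₀ (by positivity)] at h5
    linarith
  · have h5 : 24 * ((d:ℝ) + 1) / g ≤ p := by linarith
    have h6 : ((d:ℝ) + 1) / p ≤ g / 24 := by
      rw [div_le_iff₀ hg0] at h5
      rw [div_le_div_iff₀ hp0 (by norm_num)]; linarith
    have h7 : 0 ≤ ((d:ℝ) + 1) / p := by positivity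
    have h8 : γ + 4 * κ + (2 + 8 * κ) * (((d:ℝ) + 1) / p) < 1 / σ := by
      have : (2 + 8 * κ) * (((d:ℝ) + 1) / p) ≤ 6 * (g / 24) := by
        apply mul_le_mul _ h6 h7 (by norm_num); linarith
      rw [hγ]; linarith
    rw [lt_div_iff₀ hσ0] at h8
    linarith

lemma tendsto_rpow_zero_right {s : ℝ} (hs : 0 < s) :
    Tendsto (fun δ : ℝ => δ ^ s) (nhdsWithin 0 (Ioi 0)) (nhds 0) := by
  have h : Tendsto (fun δ : ℝ => δ ^ s) (nhds 0) (nhds ((0:ℝ) ^ s)) :=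
    (Real.continuousAt_rpow_const 0 s (Or.inr hs.le)).tendsto
  rw [Real.zero_rpow hs.ne'] at h
  exact h.mono_left nhdsWithin_le_nhds

lemma amp_eq (C δ σ ε γ e : ℝ) (hC : 1 ≤ C) (hδ : 0 < δ) :
    δ * (C * (δ ^ (-σ)) ^ ε * (11 * (δ ^ (-σ)) ^ 2 * (C * (δ ^ (-σ)) ^ ε) ^ 2) ^ e) * (δ ^ (-σ)) ^ γ
      = C * (11 * C ^ 2) ^ e * δ ^ (1 - σ * (γ + ε + (2 + 2 * ε) * e)) := by
  have hC0 : 0 < C := by linarith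
  have h1 : 11 * (δ ^ (-σ)) ^ 2 * (C * (δ ^ (-σ)) ^ ε) ^ 2 = 11 * C ^ 2 * δ ^ (-σ * (2 + 2 * ε)) := by
    rw [mul_pow, ← Real.rpow_mul hδ.le, ← Real.rpow_mul_natCast hδ.le, ← Real.rpow_mul_natCast hδ.le]
    have : δ ^ (-σ * (2 + 2 * ε)) = δ ^ (-σ * ((2:ℕ):ℝ)) * δ ^ (-σ * ε * ((2:ℕ):ℝ)) := by
      rw [← Real.rpow_add hδ]; congr 1; push_cast; ring
    rw [this]; ring
  rw [h1, Real.mul_rpow (by positivity) (by positivity), ← Real.rpow_mul hδ.le, ← Real.rpow_mul hδ.le,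
    ← Real.rpow_mul hδ.le]
  have : δ ^ (1 - σ * (γ + ε + (2 + 2 * ε) * e)) =
      δ ^ (1:ℝ) * δ ^ (-σ * ε) * δ ^ (-σ * (2 + 2 * ε) * e) * δ ^ (-σ * γ) := by
    rw [← Real.rpow_add hδ, ← Real.rpow_add hδ, ← Real.rpow_add hδ]; congr 1; ring
  rw [this, Real.rpow_one]; ring

/-- In the same setting (Gaussian, centered, homogeneous, divergence-free
field with power spectrum determined by `a` and `α`), assume `1/2 < α < 1` and set
`H = 1/(2α)`. For every `t > 0` and `ρ > 0`, with `T_δ⁻ = t^{1-ρ} δ^{-2H(1-ρ)}`, one has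
`lim_{δ→0+} E|y_δ(T_δ⁻)|² = 0`. -/
theorem stmt1 (d : ℕ) (hd : 2 ≤ d)
    (α : ℝ) (hα1 : 1 / 2 < α) (hα2 : α < 1)
    (K : ℝ) (hK : 0 < K)
    (a : ℝ → ℝ)
    (ha_nonneg : ∀ r : ℝ, 0 ≤ r → 0 ≤ a r)
    (ha_bdd : ∃ M : ℝ, ∀ r : ℝ, 0 ≤ r → a r ≤ M)
    (ha_meas : Measurable a)
    (ha_supp : ∀ r : ℝ, K < r → a r = 0)
    (ha_cont : ContinuousAt a 0)
    (ha_one : a 0 = 1)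
    (v : EuclideanSpace ℝ (Fin d)) (hv : ‖v‖ = 1)
    (Ω : Type*) [MeasurableSpace Ω] (P : Measure Ω) [IsProbabilityMeasure P]
    (F : Ω → EuclideanSpace ℝ (Fin d) → EuclideanSpace ℝ (Fin d))
    (hF_meas : Measurable (Function.uncurry F))
    (hF_reg : ∀ᵐ ω ∂P, ContDiff ℝ 1 (F ω) ∧
      ∀ x : EuclideanSpace ℝ (Fin d),
        ∑ i : Fin d, fderiv ℝ (F ω) x (EuclideanSpace.single i 1) i = 0)
    (hF_gauss : ∀ (N : ℕ) (x c : Fin N → EuclideanSpace ℝ (Fin d)),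
      Measure.map (fun ω => ∑ j : Fin N, ⟪c j, F ω (x j)⟫) P =
        gaussianReal 0 (Real.toNNReal (∑ j : Fin N, ∑ l : Fin N,
          ∑ i : Fin d, ∑ i' : Fin d,
            c j i * covEntry d α a (x j - x l) i i' * c l i')))
    (X : ℝ → Ω → ℝ → EuclideanSpace ℝ (Fin d))
    (hX_meas : ∀ δ ∈ Ioc (0:ℝ) 1, Measurable (Function.uncurry (X δ)))
    (hX_sol : ∀ δ ∈ Ioc (0:ℝ) 1, ∀ᵐ ω ∂P, X δ ω 0 = 0 ∧
      ∀ s : ℝ, 0 ≤ s → HasDerivAt (X δ ω) (v + δ • F ω (X δ ω s)) s)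
    (hy_int : ∀ δ ∈ Ioc (0:ℝ) 1, ∀ s : ℝ,
      Integrable (fun ω => ‖X δ ω s - s • v‖ ^ 2) P)
    (hy_loc : ∀ δ ∈ Ioc (0:ℝ) 1, ∀ T : ℝ,
      IntegrableOn (fun s => ∫ ω, ‖X δ ω s - s • v‖ ^ 2 ∂P) (Icc 0 T) volume)
    (t ρ : ℝ) (ht : 0 < t) (hρ : 0 < ρ) :
    Tendsto (fun δ : ℝ =>
        ∫ ω, ‖X δ ω (t ^ (1 - ρ) * δ ^ (-2 * (1 / (2 * α)) * (1 - ρ))) -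
            (t ^ (1 - ρ) * δ ^ (-2 * (1 / (2 * α)) * (1 - ρ))) • v‖ ^ 2 ∂P)
      (nhdsWithin 0 (Ioi 0)) (nhds 0) := by
  obtain ⟨σ, κ, p, hσ, hσ2, hκ, hκ1, hκ2, hp2, hp4, hθ, h13, hlast⟩ := params d hd α ρ hα1 hα2 hρ
  have hα0 : 0 < α := by linarith
  have hd' : (2:ℝ) ≤ d := by exact_mod_cast hd
  have hpR : (0:ℝ) < p := by
    have : 0 < p := by omega
    exact_mod_cast this
  have hκ4 : κ < 1 / 4 := by linarith
  have hF_cont : ∀ᵐ ω ∂P, Continuous (F ω) := by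
    filter_upwards [hF_reg] with ω h using h.1.continuous
  have hκd : 2 * κ / d ≤ κ := by
    rw [div_le_iff₀ (by linarith)]; nlinarith
  have hκd0 : 0 < 2 * κ / d := by positivity
  have hspec := spec_int (d := d) (by omega) (2 - 2 * (α + κ)) (2 * α + (d:ℝ) - 2) (1 - 2 * κ / d) K
    (by linarith) (by linarith) (by linarith) (by field_simp; ring) hK v hv
  obtain ⟨C0, hC0, hM⟩ := field_moment d hd α K hK a ha_nonneg ha_bdd ha_meas ha_supp v hv
    (2 - 2 * (α + κ)) (by linarith) hspec P F hF_meas hF_gauss p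
  obtain ⟨A, hA, hSg⟩ := Sg_exp (γ := α - κ) (p := p) (by omega) hK (β := α + κ) (by linarith) (by linarith)
    (by nlinarith) hv hC0 hF_meas hF_cont hM
  obtain ⟨C, hC, hgrr⟩ := grr d p (by omega)
  have hC1 : 0 < C := by linarith
  set e : ℝ := ((d:ℝ) + 1) / p with he
  set η : ℝ := 1 - 2 * (d:ℝ) / p with hη
  have hη0 : 0 < η := by
    have : 2 * (d:ℝ) / p < 1 := by
      rw [div_lt_one hpR]
      have : 2 * ((d:ℝ) + 1) ≤ p := by exact_mod_cast hp2
      linarith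
    linarith
  set D : ℝ := C * (11 * C ^ 2) ^ e with hD
  set s : ℝ := 1 - σ * ((α - κ) + 4 * κ + (2 + 2 * (4 * κ)) * e) with hs
  have hs0 : 0 < s := by
    have : (2 + 2 * (4 * κ)) = 2 + 8 * κ := by ring
    rw [hs, this]; linarith
  have hDs : Tendsto (fun δ : ℝ => D * δ ^ s) (nhdsWithin 0 (Ioi 0)) (nhds 0) := by
    simpa using (tendsto_rpow_zero_right hs0).const_mul D
  set q : ℝ := 4 + ((α + κ) - (α - κ)) * p - (4 * κ) * (p - 4) with hq
  have hq0 : q < 0 := by rw [hq]; nlinarith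
  have hB2 : Tendsto (fun δ : ℝ => 81 * C ^ 4 * A * δ ^ (-σ * q)) (nhdsWithin 0 (Ioi 0)) (nhds 0) := by
    simpa using (tendsto_rpow_zero_right (s := -σ * q) (by nlinarith)).const_mul (81 * C ^ 4 * A)
  have hbound : Tendsto (fun δ : ℝ => (2 * (D * δ ^ s)) ^ 2 + 81 * C ^ 4 * A * δ ^ (-σ * q))
      (nhdsWithin 0 (Ioi 0)) (nhds 0) := by
    simpa using ((hDs.const_mul 2).pow 2).add hB2
  have hsm : ∀ᶠ δ in nhdsWithin (0:ℝ) (Ioi 0),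
      1 / (1 - 2 ^ (1 - (α - κ) * (1 + η))) * (D * δ ^ s) ^ η ≤ 1 := by
    have h0 : Tendsto (fun x : ℝ => x ^ η) (nhds 0) (nhds ((0:ℝ) ^ η)) :=
      (Real.continuousAt_rpow_const 0 η (Or.inr hη0.le)).tendsto
    rw [Real.zero_rpow hη0.ne'] at h0
    have h1 := (h0.comp hDs).const_mul (1 / (1 - (2:ℝ) ^ (1 - (α - κ) * (1 + η))))
    rw [mul_zero] at h1
    exact h1.eventually (eventually_le_nhds one_pos)
  have hTB : ∀ᶠ δ in nhdsWithin (0:ℝ) (Ioi 0),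
      t ^ (1 - ρ) * δ ^ (-2 * (1 / (2 * α)) * (1 - ρ)) ≤ δ ^ (-σ) := by
    have h1 := (tendsto_rpow_zero_right (s := σ - (1 - ρ) / α) (by linarith)).const_mul (t ^ (1 - ρ))
    rw [mul_zero] at h1
    filter_upwards [h1.eventually (eventually_le_nhds one_pos), self_mem_nhdsWithin] with δ h2 hδ
    have hδ : 0 < δ := hδ
    have : δ ^ (-2 * (1 / (2 * α)) * (1 - ρ)) = δ ^ (σ - (1 - ρ) / α) * δ ^ (-σ) := by
      rw [← Real.rpow_add hδ]; congr 1; field_simp; ring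
    rw [this, ← mul_assoc]
    exact mul_le_of_le_one_left (by positivity) h2
  have hδ1 : ∀ᶠ δ in nhdsWithin (0:ℝ) (Ioi 0), δ ≤ 1 :=
    (eventually_le_nhds one_pos).filter_mono nhdsWithin_le_nhds
  refine squeeze_zero' (Eventually.of_forall fun δ => integral_nonneg fun ω => by positivity) ?_ hbound
  filter_upwards [hsm, hTB, hδ1, self_mem_nhdsWithin] with δ h1 h2 h3 hδ
  have hδ : 0 < δ := hδ
  have hamp := amp_eq C δ σ (4 * κ) (α - κ) e hC hδ
  have hB1 : 1 ≤ δ ^ (-σ) := Real.one_le_rpow_of_pos_of_le_one_of_nonpos hδ h3 (by linarith)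
  have hT : 0 < t ^ (1 - ρ) * δ ^ (-2 * (1 / (2 * α)) * (1 - ρ)) := by positivity
  have key := key_est hp2 hp4 C hC hgrr hv hF_meas hF_cont (X δ) δ
    (t ^ (1 - ρ) * δ ^ (-2 * (1 / (2 * α)) * (1 - ρ))) (δ ^ (-σ)) (α - κ) (4 * κ) A
    (((α + κ) - (α - κ)) * p) hδ h3 hT h2 hB1 (by linarith) hA (by linarith) hθ
    (hX_sol δ ⟨hδ, h3⟩) (hy_int δ ⟨hδ, h3⟩ _) (hSg _ _ hT h2 hB1) (by rw [hamp]; exact h1)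
  refine key.trans (le_of_eq ?_)
  rw [mul_assoc 2, hamp, ← Real.rpow_mul hδ.le]
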